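/- Let φ be an inner function, i.e., a holomorphic self-map of the unit disc 𝔻 whose radial boundary values have modulus 1 almost everywhere on the unit circle. Then ℳ(φ) = ℳ(𝒟) if and only if φ is a finite Blaschke product. -/

import Mathlib

open Complex MeasureTheory Metric Set Filter

noncomputable section

/-- The open unit disc in the complex plane. -/
def unitDisc : Set ℂ := Metric.ball 0 1

/-- The square of the Dirichlet norm:
`‖f‖²_𝒟 = |f(0)|² + ∫_𝔻 |f′(z)|² dA(z)`, with `A` normalized area measure. -/
def dirNormSq (f : ℂ → ℂ) : ℝ :=
  ‖f 0‖ ^ 2 + (1 / Real.pi) * ∫ z in unitDisc, ‖deriv f z‖ ^ 2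

/-- Membership in the Dirichlet space `𝒟`: `f` is holomorphic on `𝔻` and
`|f′|²` is integrable over `𝔻`. -/
def MemDirichlet (f : ℂ → ℂ) : Prop :=
  DifferentiableOn ℂ f unitDisc ∧
    IntegrableOn (fun z : ℂ => ‖deriv f z‖ ^ 2) unitDisc

/-- The `k`-th Taylor coefficient of `f` at `0`. -/
def taylorCoeff (f : ℂ → ℂ) (k : ℕ) : ℂ := iteratedDeriv k f 0 / (Nat.factorial k : ℂ)

/-- The square of the Hardy space `H²` norm: `Σ |a_k|²`. -/
def hardyNormSq (f : ℂ → ℂ) : ℝ := ∑' k : ℕ, ‖taylorCoeff f k‖ ^ 2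

/-- Membership in the Hardy space `H²`. -/
def MemHardy (f : ℂ → ℂ) : Prop :=
  DifferentiableOn ℂ f unitDisc ∧ Summable fun k : ℕ => ‖taylorCoeff f k‖ ^ 2

/-- The `H²` inner product `⟨f, g⟩ = Σ a_k \overline{b_k}`. -/
def hardyInner (f g : ℂ → ℂ) : ℂ :=
  ∑' k : ℕ, taylorCoeff f k * (starRingEnd ℂ) (taylorCoeff g k)

/-- `B` is a finite Blaschke product:
`B(z) = e^{iθ} ∏_{j=1}^{n} (a_j − z)/(1 − \overline{a_j} z)` with all `a_j ∈ 𝔻`. -/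
def IsFiniteBlaschke (B : ℂ → ℂ) : Prop :=
  ∃ (θ : ℝ) (n : ℕ) (a : Fin n → ℂ), (∀ j, ‖a j‖ < 1) ∧
    ∀ z ∈ unitDisc,
      B z = Complex.exp (θ * Complex.I) *
        ∏ j, (a j - z) / (1 - (starRingEnd ℂ) (a j) * z)

/-- Membership in the model space `K_B = H² ⊖ BH²`: `g ∈ H²` and `g ⟂ B·h`
for every `h ∈ H²`. -/
def MemModelSpace (B g : ℂ → ℂ) : Prop :=
  MemHardy g ∧ ∀ h : ℂ → ℂ, MemHardy h →
    hardyInner g (fun z => B z * h z) = 0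

/-- The weighted composition operator `W_{u,φ} : f ↦ u·(f∘φ)` is bounded
on the Dirichlet space: there is a constant `C` with
`‖u·(f∘φ)‖²_𝒟 ≤ C ‖f‖²_𝒟` (and `u·(f∘φ) ∈ 𝒟`) for all `f ∈ 𝒟`. -/
def WCOBounded (u φ : ℂ → ℂ) : Prop :=
  ∃ C : ℝ, 0 ≤ C ∧ ∀ f : ℂ → ℂ, MemDirichlet f →
    MemDirichlet (fun z => u z * f (φ z)) ∧
      dirNormSq (fun z => u z * f (φ z)) ≤ C * dirNormSq f

/-- `φ` is an inner function: a holomorphic self-map of `𝔻` whose radial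
boundary values have modulus `1` for almost every angle. -/
def IsInner (φ : ℂ → ℂ) : Prop :=
  DifferentiableOn ℂ φ unitDisc ∧ Set.MapsTo φ unitDisc unitDisc ∧
    ∀ᵐ θ : ℝ ∂(volume.restrict (Set.Ioc (0 : ℝ) (2 * Real.pi))),
      Tendsto (fun r : ℝ => ‖φ ((r : ℂ) * Complex.exp (θ * Complex.I))‖)
        (nhdsWithin 1 (Set.Iio 1)) (nhds 1)

/-- The multiplier space `ℳ(φ) = {u ∈ 𝒟 : W_{u,φ} is bounded on 𝒟}`. -/
def multSpace (φ : ℂ → ℂ) : Set (ℂ → ℂ) :=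
  {u | MemDirichlet u ∧ WCOBounded u φ}

/-- The multipliers of the Dirichlet space: holomorphic `u` on `𝔻` with
`u·f ∈ 𝒟` for every `f ∈ 𝒟`. -/
def dirichletMultipliers : Set (ℂ → ℂ) :=
  {u | DifferentiableOn ℂ u unitDisc ∧
    ∀ f : ℂ → ℂ, MemDirichlet f → MemDirichlet fun z => u z * f z}

/-!
Suppose `ℳ(φ) = ℳ(𝒟)`. Then `1 ∈ ℳ(φ)`, so `φ ∈ 𝒟`. With `S` the shift on the Hardy space, an
inner function satisfies `1 - |φ(z)|² = (1 - |z|²) ∑ₘ |(S*ᵐ⁺¹φ)(z)|²`, and `∑ₘ ‖S*ᵐ⁺¹φ‖²` is the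
Dirichlet integral of `φ`. For each `f` in the Hardy space `(1 - |z|²)|f(z)|²` is bounded by `‖f‖²`
and tends to `0` at the circle, so dominated convergence gives `|φ(z)| → 1` uniformly as `|z| → 1`.
Such a `φ` has finitely many zeros, and dividing them out leaves a constant.

Conversely let `B` be a finite Blaschke product of degree `n`. As `B` is at most `n`-to-one, the
change of variables formula gives `∫ |(f ∘ B)'|² ≤ n ∫ |f'|²`, so composition with `B` is bounded
on `𝒟` and `ℳ(𝒟) ⊆ ℳ(B)`. If `u ∈ ℳ(B)`, then testing on reproducing kernels shows that `u` is
bounded, and every `g ∈ 𝒟` can be written `g = ∑_{j<n} eⱼ · (fⱼ ∘ B)` with bounded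
Takenaka–Malmquist functions `eⱼ` and `fⱼ ∈ 𝒟`. Since `u' · (fⱼ ∘ B)` is square integrable for
each `j`, so are `u'g` and `(ug)'`.
-/

open scoped InnerProductSpace ComplexConjugate Topology

section Taylor

lemma mem_unitDisc {z : ℂ} : z ∈ unitDisc ↔ ‖z‖ < 1 := mem_ball_zero_iff

lemma isOpen_unitDisc : IsOpen unitDisc := isOpen_ball

lemma isPreconnected_unitDisc : IsPreconnected unitDisc :=
  (convex_ball 0 1).isPreconnected

variable {f : ℂ → ℂ} {a : ℕ → ℂ}

lemma hasSum_taylorCoeff (hf : DifferentiableOn ℂ f unitDisc) {z : ℂ} (hz : ‖z‖ < 1) :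
    HasSum (fun n => taylorCoeff f n * z ^ n) (f z) := by
  refine (hasSum_taylorSeries_on_ball hf (mem_unitDisc.2 hz)).congr_fun fun n => ?_
  simp only [taylorCoeff, sub_zero, smul_eq_mul]
  ring

lemma hasFPowerSeriesOnBall_of_hasSum
    (h : ∀ z : ℂ, ‖z‖ < 1 → HasSum (fun n => a n * z ^ n) (f z)) :
    HasFPowerSeriesOnBall f (FormalMultilinearSeries.ofScalars ℂ a) 0 1 where
  r_le := by
    refine ENNReal.le_of_forall_nnreal_lt fun r hr =>
      FormalMultilinearSeries.le_radius_of_summable_norm _ ?_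
    have hr' : (r : ℝ) < 1 := by exact_mod_cast hr
    simpa [FormalMultilinearSeries.ofScalars_norm] using (h r (by simpa using hr')).summable.norm
  r_pos := one_pos
  hasSum := by
    intro y hy
    have hy' : ‖y‖ < 1 := by simpa [← ENNReal.coe_one, Metric.eball_coe] using hy
    simpa [mul_comm] using h y hy'

lemma differentiableOn_of_hasSum
    (h : ∀ z : ℂ, ‖z‖ < 1 → HasSum (fun n => a n * z ^ n) (f z)) :
    DifferentiableOn ℂ f unitDisc := by
  have hf := (hasFPowerSeriesOnBall_of_hasSum h).differentiableOn
  rwa [← ENNReal.coe_one, Metric.eball_coe] at hf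

lemma taylorCoeff_eq_of_hasSum
    (h : ∀ z : ℂ, ‖z‖ < 1 → HasSum (fun n => a n * z ^ n) (f z)) (n : ℕ) :
    taylorCoeff f n = a n := by
  have hp := (hasFPowerSeriesOnBall_of_hasSum h).hasFPowerSeriesAt
  have := congrArg (fun p => p.coeff n)
    (hp.eq_formalMultilinearSeries hp.analyticAt.hasFPowerSeriesAt)
  simpa [FormalMultilinearSeries.coeff_ofScalars, taylorCoeff] using this.symm

lemma summable_norm_taylorCoeff (hf : DifferentiableOn ℂ f unitDisc) {r : ℝ} (h0 : 0 ≤ r)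
    (hr : r < 1) : Summable fun n => ‖taylorCoeff f n * (r : ℂ) ^ n‖ :=
  (hasSum_taylorCoeff hf (by simpa [abs_of_nonneg h0] using hr)).summable.norm

lemma taylorCoeff_zero (f : ℂ → ℂ) : taylorCoeff f 0 = f 0 := by simp [taylorCoeff]

lemma taylorCoeff_deriv (f : ℂ → ℂ) (n : ℕ) :
    taylorCoeff (deriv f) n = (n + 1) * taylorCoeff f (n + 1) := by
  have hn : (n : ℂ) + 1 ≠ 0 := by exact_mod_cast n.succ_ne_zero
  simp only [taylorCoeff, iteratedDeriv_succ', Nat.factorial_succ, Nat.cast_mul, Nat.cast_succ]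
  field_simp

end Taylor

section CircleIntegrals

lemma norm_exp_natCast_mul_I (n : ℕ) (θ : ℝ) : ‖exp (n * (θ * I))‖ = 1 := by
  rw [← norm_exp_ofReal_mul_I (n * θ)]
  push_cast
  ring_nf

lemma norm_real_mul_exp {r : ℝ} (h0 : 0 ≤ r) (θ : ℝ) : ‖r * exp (θ * I)‖ = r := by
  rw [norm_mul, norm_exp_ofReal_mul_I, mul_one, norm_real, Real.norm_of_nonneg h0]

lemma integral_exp_int_mul_I (c : ℝ) (m : ℤ) :
    ∫ θ in c..(c + 2 * Real.pi), exp (m * (θ * I)) = if m = 0 then 2 * (Real.pi : ℂ) else 0 := by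
  split_ifs with h
  · simp [h]
  · have hI : (m : ℂ) * I ≠ 0 := mul_ne_zero (by exact_mod_cast h) I_ne_zero
    have hperiod : (m : ℂ) * I * ((c + 2 * Real.pi : ℝ) : ℂ)
        = m * I * c + m * (2 * Real.pi * I) := by push_cast; ring
    calc ∫ θ in c..(c + 2 * Real.pi), exp (m * (θ * I))
        = ∫ θ in c..(c + 2 * Real.pi), exp (m * I * (θ : ℝ)) := by
          congr 1 with θ; congr 1; ring
      _ = 0 := by
          rw [integral_exp_mul_complex hI, hperiod, exp_add, exp_int_mul_two_pi_mul_I]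
          simp

lemma hasSum_integral_mul_of_summable_norm {α : ℕ → ℂ} (hα : Summable fun n => ‖α n‖)
    {χ : ℕ → ℝ → ℂ} (hχ : ∀ n, Continuous (χ n)) (hχ1 : ∀ n θ, ‖χ n θ‖ ≤ 1)
    {F G : ℝ → ℂ} (hF : ∀ θ, HasSum (fun n => α n * χ n θ) (F θ)) (hG : Continuous G)
    (a b : ℝ) :
    HasSum (fun n => α n * ∫ θ in a..b, χ n θ * G θ) (∫ θ in a..b, F θ * G θ) := by
  simp_rw [← intervalIntegral.integral_const_mul, ← mul_assoc]
  refine intervalIntegral.hasSum_integral_of_dominated_convergence (fun n θ => ‖α n‖ * ‖G θ‖)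
    (fun n => by fun_prop) (fun n => ae_of_all _ fun θ _ => ?_)
    (ae_of_all _ fun θ _ => hα.mul_right _) ?_ (ae_of_all _ fun θ _ => (hF θ).mul_right _)
  · rw [norm_mul, norm_mul]
    gcongr
    exact mul_le_of_le_one_right (norm_nonneg _) (hχ1 n θ)
  · simp_rw [tsum_mul_right]
    exact (hG.norm.const_mul _).intervalIntegrable _ _

variable {f : ℂ → ℂ} {r : ℝ}

lemma hasSum_taylorCoeff_circle (hf : DifferentiableOn ℂ f unitDisc) (h0 : 0 ≤ r) (hr : r < 1)
    (θ : ℝ) :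
    HasSum (fun n => taylorCoeff f n * (r : ℂ) ^ n * exp (n * (θ * I)))
      (f (r * exp (θ * I))) := by
  refine (hasSum_taylorCoeff hf (by rwa [norm_real_mul_exp h0])).congr_fun fun n => ?_
  rw [mul_pow, ← exp_nat_mul]
  ring

lemma continuous_circle (hf : ContinuousOn f unitDisc) (h0 : 0 ≤ r) (hr : r < 1) :
    Continuous fun θ : ℝ => f (r * exp (θ * I)) :=
  hf.comp_continuous (by fun_prop) fun θ =>
    mem_unitDisc.2 (by rwa [norm_real_mul_exp h0])

lemma integral_circle_mul_exp_neg (hf : DifferentiableOn ℂ f unitDisc) (h0 : 0 ≤ r) (hr : r < 1)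
    (c : ℝ) (k : ℕ) :
    ∫ θ in c..(c + 2 * Real.pi), f (r * exp (θ * I)) * exp (-k * (θ * I)) =
      2 * Real.pi * (taylorCoeff f k * r ^ k) := by
  have hsum := hasSum_integral_mul_of_summable_norm (summable_norm_taylorCoeff hf h0 hr)
    (χ := fun n θ => exp (n * (θ * I))) (fun n => by fun_prop)
    (fun n θ => (norm_exp_natCast_mul_I n θ).le) (hasSum_taylorCoeff_circle hf h0 hr)
    (G := fun θ => exp (-k * (θ * I))) (by fun_prop) c (c + 2 * Real.pi)
  have hval (n : ℕ) : ∫ θ in c..(c + 2 * Real.pi), exp (n * (θ * I)) * exp (-k * (θ * I))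
      = if n = k then 2 * (Real.pi : ℂ) else 0 := by
    calc ∫ θ in c..(c + 2 * Real.pi), exp (n * (θ * I)) * exp (-k * (θ * I))
        = ∫ θ in c..(c + 2 * Real.pi), exp (((n - k : ℤ) : ℂ) * (θ * I)) := by
          congr 1 with θ; rw [← exp_add]; congr 1; push_cast; ring
      _ = _ := by rw [integral_exp_int_mul_I]; simp [sub_eq_zero]
  simp_rw [hval] at hsum
  rw [hsum.unique (hasSum_single k fun n hn => by rw [if_neg hn, mul_zero]), if_pos rfl]
  ring

/- Expanding only the conjugated factor reduces the double series to the Fourier coefficients of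
`f` itself. -/
lemma hasSum_integral_circle_normSq_mul_exp_neg (hf : DifferentiableOn ℂ f unitDisc)
    (h0 : 0 ≤ r) (hr : r < 1) (c : ℝ) (k : ℕ) :
    HasSum (fun n => 2 * Real.pi * (taylorCoeff f (n + k) * conj (taylorCoeff f n)) *
        (r : ℂ) ^ (2 * n + k))
      (∫ θ in c..(c + 2 * Real.pi),
        ((‖f (r * exp (θ * I))‖ ^ 2 : ℝ) : ℂ) * exp (-k * (θ * I))) := by
  have hconj (θ : ℝ) : HasSum (fun n : ℕ => conj (taylorCoeff f n * r ^ n) * exp (-n * (θ * I)))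
      (conj (f (r * exp (θ * I)))) := by
    refine ((hasSum_taylorCoeff_circle hf h0 hr θ).map (starRingEnd ℂ)
      continuous_conj).congr_fun fun n => ?_
    simp only [Function.comp_apply, map_mul, ← exp_conj, map_natCast, conj_I, conj_ofReal,
      neg_mul, mul_neg]
  have hsum := hasSum_integral_mul_of_summable_norm
    (α := fun n => conj (taylorCoeff f n * r ^ n))
    (by simpa only [norm_conj] using summable_norm_taylorCoeff hf h0 hr)
    (χ := fun n θ => exp (-n * (θ * I))) (fun n => by fun_prop)
    (fun n θ => by rw [neg_mul, exp_neg, norm_inv, norm_exp_natCast_mul_I, inv_one])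
    hconj (G := fun θ => f (r * exp (θ * I)) * exp (-k * (θ * I)))
    ((continuous_circle hf.continuousOn h0 hr).mul (by fun_prop)) c (c + 2 * Real.pi)
  convert hsum using 1
  · ext n
    have hcoeff := integral_circle_mul_exp_neg hf h0 hr c (n + k)
    calc _ = conj (taylorCoeff f n * r ^ n) *
          (2 * Real.pi * (taylorCoeff f (n + k) * r ^ (n + k))) := by
          simp only [map_mul, map_pow, conj_ofReal]; ring
      _ = _ := by
          rw [← hcoeff]
          congr 2 with θ
          rw [mul_left_comm (exp _), ← exp_add]
          congr 2
          push_cast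
          ring
  · congr 1 with θ
    rw [← normSq_eq_norm_sq, ← mul_conj]
    ring

lemma hasSum_integral_circle_normSq (hf : DifferentiableOn ℂ f unitDisc) (h0 : 0 ≤ r)
    (hr : r < 1) (c : ℝ) :
    HasSum (fun n => 2 * Real.pi * ‖taylorCoeff f n‖ ^ 2 * r ^ (2 * n))
      (∫ θ in c..(c + 2 * Real.pi), ‖f (r * exp (θ * I))‖ ^ 2) := by
  have hsum := hasSum_integral_circle_normSq_mul_exp_neg hf h0 hr c 0
  simp only [CharP.cast_eq_zero, neg_zero, zero_mul, exp_zero, mul_one, add_zero, mul_conj,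
    normSq_eq_norm_sq, intervalIntegral.integral_ofReal] at hsum
  exact_mod_cast hsum

lemma lintegral_circle_normSq (hf : DifferentiableOn ℂ f unitDisc) (h0 : 0 ≤ r) (hr : r < 1) :
    ∫⁻ θ in Ioo (-Real.pi) Real.pi, ENNReal.ofReal (‖f (r * exp (θ * I))‖ ^ 2) =
      ∑' n, ENNReal.ofReal (2 * Real.pi * ‖taylorCoeff f n‖ ^ 2 * r ^ (2 * n)) := by
  have hsum := hasSum_integral_circle_normSq hf h0 hr (-Real.pi)
  have hcont : Continuous fun θ : ℝ => ‖f (r * exp (θ * I))‖ ^ 2 :=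
    (continuous_circle hf.continuousOn h0 hr).norm.pow 2
  rw [← ENNReal.ofReal_tsum_of_nonneg (fun n => by positivity) hsum.summable, hsum.tsum_eq,
    ← ofReal_integral_eq_lintegral_ofReal
      (hcont.integrableOn_Icc.mono_set Ioo_subset_Icc_self) (ae_of_all _ fun θ => by positivity),
    ← integral_Ioc_eq_integral_Ioo, intervalIntegral.integral_of_le (by linarith [Real.pi_pos]),
    neg_add_eq_sub, two_mul, add_sub_cancel_right]

lemma lintegral_unitDisc_eq_polar {F : ℂ → ENNReal} (hF : Measurable F) :
    ∫⁻ z in unitDisc, F z = ∫⁻ r in Ioo (0 : ℝ) 1,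
      ENNReal.ofReal r * ∫⁻ θ in Ioo (-Real.pi) Real.pi, F (r * exp (θ * I)) := by
  have hdisc : MeasurableSet unitDisc := isOpen_unitDisc.measurableSet
  have hpolar (p : ℝ × ℝ) : Complex.polarCoord.symm p = p.1 * exp (p.2 * I) := by
    rw [Complex.polarCoord_symm_apply, exp_mul_I, ofReal_cos, ofReal_sin]
  have hmeas : Measurable fun p : ℝ × ℝ =>
      ENNReal.ofReal p.1 • unitDisc.indicator F (p.1 * exp (p.2 * I)) :=
    Measurable.mul (by fun_prop) ((hF.indicator hdisc).comp (by fun_prop))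
  rw [← lintegral_indicator hdisc, ← Complex.lintegral_comp_polarCoord_symm]
  simp_rw [hpolar]
  rw [show polarCoord.target = Ioi (0 : ℝ) ×ˢ Ioo (-Real.pi) Real.pi from rfl,
    Measure.volume_eq_prod, ← Measure.prod_restrict, lintegral_prod _ hmeas.aemeasurable,
    show Ioo (0 : ℝ) 1 = Iio 1 ∩ Ioi 0 from (inter_comm _ _).trans rfl,
    ← setLIntegral_indicator measurableSet_Iio]
  refine setLIntegral_congr_fun measurableSet_Ioi fun r (hr : 0 < r) => ?_
  have hmem (θ : ℝ) : r * exp (θ * I) ∈ unitDisc ↔ r ∈ Iio 1 := by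
    rw [mem_unitDisc, norm_real_mul_exp hr.le, mem_Iio]
  by_cases hr1 : r ∈ Iio (1 : ℝ)
  · simp only [indicator, hmem, hr1, if_true, smul_eq_mul]
    exact lintegral_const_mul' _ _ ENNReal.ofReal_ne_top
  · simp only [indicator, hmem, hr1, if_false, smul_zero, lintegral_zero]

lemma lintegral_ofReal_const_mul_pow {C : ℝ} (hC : 0 ≤ C) (n : ℕ) :
    ∫⁻ r in Ioo (0 : ℝ) 1, ENNReal.ofReal (C * r ^ n) = ENNReal.ofReal (C / (n + 1)) := by
  rw [← ofReal_integral_eq_lintegral_ofReal, ← integral_Ioc_eq_integral_Ioo,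
    ← intervalIntegral.integral_of_le zero_le_one, intervalIntegral.integral_const_mul,
    integral_pow]
  · simp [div_eq_mul_inv]
  · exact (Continuous.integrableOn_Icc (by fun_prop)).mono_set Ioo_subset_Icc_self
  · filter_upwards [ae_restrict_mem measurableSet_Ioo] with r hr
    have := hr.1.le
    positivity

lemma lintegral_unitDisc_normSq (hf : DifferentiableOn ℂ f unitDisc) :
    ∫⁻ z in unitDisc, ENNReal.ofReal (‖f z‖ ^ 2) =
      ∑' n : ℕ, ENNReal.ofReal (Real.pi * (‖taylorCoeff f n‖ ^ 2 / (n + 1))) := by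
  classical
  have hdisc : MeasurableSet unitDisc := isOpen_unitDisc.measurableSet
  have hmeas : Measurable (unitDisc.indicator fun z => ENNReal.ofReal (‖f z‖ ^ 2)) := by
    rw [← Set.piecewise_eq_indicator]
    exact ContinuousOn.measurable_piecewise
      (ENNReal.continuous_ofReal.comp_continuousOn (hf.continuousOn.norm.pow 2))
      continuousOn_const hdisc
  have hcircle : ∀ r ∈ Ioo (0 : ℝ) 1,
      (ENNReal.ofReal r * ∫⁻ θ in Ioo (-Real.pi) Real.pi,
        unitDisc.indicator (fun z => ENNReal.ofReal (‖f z‖ ^ 2)) (r * exp (θ * I))) =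
      ∑' n : ℕ, ENNReal.ofReal (2 * Real.pi * ‖taylorCoeff f n‖ ^ 2 * r ^ (2 * n + 1)) := by
    intro r ⟨h0, h1⟩
    have hmem (θ : ℝ) : r * exp (θ * I) ∈ unitDisc := by
      rwa [mem_unitDisc, norm_real_mul_exp h0.le]
    simp only [indicator_of_mem (hmem _)]
    rw [lintegral_circle_normSq hf h0.le h1, ← ENNReal.tsum_mul_left]
    refine tsum_congr fun n => ?_
    rw [← ENNReal.ofReal_mul h0.le]
    ring_nf
  calc ∫⁻ z in unitDisc, ENNReal.ofReal (‖f z‖ ^ 2)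
      = ∫⁻ z in unitDisc, unitDisc.indicator (fun z => ENNReal.ofReal (‖f z‖ ^ 2)) z :=
        setLIntegral_congr_fun hdisc fun z hz => by rw [indicator_of_mem hz]
    _ = ∫⁻ r in Ioo (0 : ℝ) 1,
          ∑' n : ℕ, ENNReal.ofReal (2 * Real.pi * ‖taylorCoeff f n‖ ^ 2 * r ^ (2 * n + 1)) := by
        rw [lintegral_unitDisc_eq_polar hmeas, setLIntegral_congr_fun measurableSet_Ioo hcircle]
    _ = _ := by
        rw [lintegral_tsum fun n => by fun_prop]
        refine tsum_congr fun n => ?_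
        rw [lintegral_ofReal_const_mul_pow (by positivity)]
        push_cast
        congr 1
        field_simp
        ring

end CircleIntegrals

section DirichletIntegral

/-- The Dirichlet integral `∫_𝔻 |f′|²` with respect to unnormalized area, valued in `[0, ∞]` so that
it also detects membership in `𝒟`. -/
def dirichletIntegral (f : ℂ → ℂ) : ENNReal :=
  ∫⁻ z in unitDisc, ENNReal.ofReal (‖deriv f z‖ ^ 2)

variable {f g : ℂ → ℂ}

lemma differentiableOn_deriv_unitDisc (hf : DifferentiableOn ℂ f unitDisc) :
    DifferentiableOn ℂ (deriv f) unitDisc := hf.deriv isOpen_unitDisc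

lemma hasDerivAt_of_mem_unitDisc (hf : DifferentiableOn ℂ f unitDisc) {z : ℂ}
    (hz : z ∈ unitDisc) : HasDerivAt f (deriv f z) z :=
  (hf.differentiableAt (isOpen_unitDisc.mem_nhds hz)).hasDerivAt

lemma dirichletIntegral_eq_tsum (hf : DifferentiableOn ℂ f unitDisc) :
    dirichletIntegral f = ∑' n : ℕ, ENNReal.ofReal (Real.pi * (n * ‖taylorCoeff f n‖ ^ 2)) := by
  rw [dirichletIntegral, lintegral_unitDisc_normSq (differentiableOn_deriv_unitDisc hf),
    tsum_eq_zero_add' (f := fun n : ℕ => ENNReal.ofReal (Real.pi * (n * ‖taylorCoeff f n‖ ^ 2)))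
      ENNReal.summable]
  simp only [CharP.cast_eq_zero, zero_mul, mul_zero, ENNReal.ofReal_zero, zero_add]
  refine tsum_congr fun n => ?_
  have hn : ‖(n : ℂ) + 1‖ = n + 1 := by exact_mod_cast norm_natCast (n + 1)
  rw [taylorCoeff_deriv, norm_mul, hn]
  push_cast
  field_simp

lemma memDirichlet_iff_dirichletIntegral_ne_top (hf : DifferentiableOn ℂ f unitDisc) :
    MemDirichlet f ↔ dirichletIntegral f ≠ ⊤ := by
  rw [MemDirichlet, dirichletIntegral, and_iff_right hf, IntegrableOn, ← lt_top_iff_ne_top,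
    Integrable, and_iff_right ((measurable_deriv f).norm.pow_const 2).aestronglyMeasurable,
    hasFiniteIntegral_iff_ofReal (ae_of_all _ fun _ => by positivity)]

lemma memDirichlet_iff_memLp (hf : DifferentiableOn ℂ f unitDisc) :
    MemDirichlet f ↔ MemLp (deriv f) 2 (volume.restrict unitDisc) := by
  rw [memLp_two_iff_integrable_sq_norm (aestronglyMeasurable_deriv _ _), MemDirichlet,
    and_iff_right hf, IntegrableOn]

lemma memDirichlet_iff_summable (hf : DifferentiableOn ℂ f unitDisc) :
    MemDirichlet f ↔ Summable fun n : ℕ => n * ‖taylorCoeff f n‖ ^ 2 := by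
  rw [memDirichlet_iff_dirichletIntegral_ne_top hf, dirichletIntegral_eq_tsum hf]
  constructor
  · intro h
    refine (summable_mul_left_iff Real.pi_ne_zero).1
      ((ENNReal.summable_toReal h).congr fun n => ?_)
    exact ENNReal.toReal_ofReal (by positivity)
  · intro h
    rw [← ENNReal.ofReal_tsum_of_nonneg (fun n => by positivity) (h.mul_left _)]
    exact ENNReal.ofReal_ne_top

lemma dirNormSq_eq_dirichletIntegral (f : ℂ → ℂ) :
    dirNormSq f = ‖f 0‖ ^ 2 + 1 / Real.pi * (dirichletIntegral f).toReal := by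
  rw [dirNormSq, dirichletIntegral,
    integral_eq_lintegral_of_nonneg_ae (ae_of_all _ fun _ => by positivity)
      ((measurable_deriv f).norm.pow_const 2).aestronglyMeasurable]

lemma dirNormSq_eq_tsum (hf : MemDirichlet f) :
    dirNormSq f = ‖taylorCoeff f 0‖ ^ 2 + ∑' n : ℕ, n * ‖taylorCoeff f n‖ ^ 2 := by
  rw [dirNormSq_eq_dirichletIntegral f, dirichletIntegral_eq_tsum hf.1, taylorCoeff_zero,
    ← ENNReal.ofReal_tsum_of_nonneg (fun n => by positivity)
      (((memDirichlet_iff_summable hf.1).1 hf).mul_left _),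
    ENNReal.toReal_ofReal (tsum_nonneg fun n => by positivity), tsum_mul_left]
  field_simp

lemma dirNormSq_nonneg (f : ℂ → ℂ) : 0 ≤ dirNormSq f := by
  have : 0 ≤ ∫ z in unitDisc, ‖deriv f z‖ ^ 2 := integral_nonneg fun _ => by positivity
  rw [dirNormSq]
  positivity

lemma eventuallyEq_of_eqOn_unitDisc (h : EqOn f g unitDisc) {z : ℂ} (hz : z ∈ unitDisc) :
    f =ᶠ[𝓝 z] g := by
  filter_upwards [isOpen_unitDisc.mem_nhds hz] using h

lemma deriv_eqOn_unitDisc (h : EqOn f g unitDisc) : EqOn (deriv f) (deriv g) unitDisc :=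
  fun _ hz => (eventuallyEq_of_eqOn_unitDisc h hz).deriv_eq

lemma MemDirichlet.congr (hf : MemDirichlet f) (h : EqOn f g unitDisc) : MemDirichlet g :=
  ⟨hf.1.congr h.symm, hf.2.congr_fun (fun z hz => by
    simp only [deriv_eqOn_unitDisc h hz]) isOpen_unitDisc.measurableSet⟩

lemma dirNormSq_congr (h : EqOn f g unitDisc) : dirNormSq f = dirNormSq g := by
  rw [dirNormSq, dirNormSq, h (mem_unitDisc.2 (by simp)),
    setIntegral_congr_fun isOpen_unitDisc.measurableSet
      fun z hz => by rw [deriv_eqOn_unitDisc h hz]]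

lemma memDirichlet_const (c : ℂ) : MemDirichlet fun _ => c :=
  ⟨differentiableOn_const c, by simp [IntegrableOn]⟩

lemma memDirichlet_id : MemDirichlet id :=
  ⟨differentiableOn_id, by simp [IntegrableOn, unitDisc, isFiniteMeasure_restrict]⟩

end DirichletIntegral

section AreaFormula

lemma exists_measurable_partition_injOn {X Y : Type*} [TopologicalSpace X]
    [SecondCountableTopology X] [MeasurableSpace X] [OpensMeasurableSpace X] {s : Set X}
    (hs : MeasurableSet s) {φ : X → Y} (hφ : ∀ x ∈ s, ∃ U ∈ 𝓝 x, InjOn φ U) :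
    ∃ V : ℕ → Set X, (∀ i, MeasurableSet (V i)) ∧ Pairwise (Function.onFun Disjoint V) ∧
      ⋃ i, V i = s ∧ ∀ i, InjOn φ (V i) := by
  choose! U hU hinj using hφ
  obtain ⟨t, hts, htc, hcover⟩ := TopologicalSpace.countable_cover_nhdsWithin
    (f := fun x => interior (U x)) (s := s)
    fun x hx => mem_nhdsWithin_of_mem_nhds (interior_mem_nhds.2 (hU x hx))
  rcases t.eq_empty_or_nonempty with rfl | ht
  · refine ⟨fun _ => ∅, fun _ => .empty, fun _ _ _ => disjoint_bot_left, ?_, fun _ => injOn_empty φ⟩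
    simpa [subset_empty_iff, eq_comm] using hcover
  · obtain ⟨g, rfl⟩ := htc.exists_eq_range ht
    rw [biUnion_range] at hcover
    refine ⟨disjointed fun i => interior (U (g i)) ∩ s, fun i => ?_, disjoint_disjointed _, ?_,
      fun i => ?_⟩
    · exact .disjointed (fun i => isOpen_interior.measurableSet.inter hs) i
    · rw [iUnion_disjointed, ← iUnion_inter, inter_eq_right.2 hcover]
    · exact (hinj _ (hts ⟨i, rfl⟩)).mono
        ((disjointed_subset _ i).trans (inter_subset_left.trans interior_subset))

lemma tsum_indicator_image_le {X Y : Type*} {φ : X → Y} {V : ℕ → Set X} {U : Set X} {N : ℕ}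
    (hV : Pairwise (Function.onFun Disjoint V)) (hVU : ∀ i, V i ⊆ U) {w : Y}
    (hN : {z ∈ U | φ z = w}.encard ≤ N) (F : Y → ENNReal) :
    ∑' i, (φ '' V i).indicator F w ≤ N * F w := by
  rcases isEmpty_or_nonempty X with hX | hX
  · simp [eq_empty_of_isEmpty]
  have hpre : ∀ i ∈ {i | w ∈ φ '' V i}, ∃ z ∈ V i, φ z = w := fun _ hi => hi
  choose! p hpV hpφ using hpre
  have hp : InjOn p {i | w ∈ φ '' V i} := by
    intro i hi j hj hij
    by_contra hne
    exact (hV hne).ne_of_mem (hpV i hi) (hpV j hj) hij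
  have hcard : {i | w ∈ φ '' V i}.encard ≤ N :=
    (encard_le_encard_of_injOn (t := {z ∈ U | φ z = w})
      (fun i hi => ⟨hVU i (hpV i hi), hpφ i hi⟩) hp).trans hN
  calc ∑' i, (φ '' V i).indicator F w
      = ∑' i, {i | w ∈ φ '' V i}.indicator 1 i * F w :=
        tsum_congr fun i => by
          by_cases hi : w ∈ φ '' V i <;>
            simp only [indicator, mem_ofPred_eq, hi, if_true, if_false, Pi.one_apply, one_mul,
              zero_mul]
    _ = ({i | w ∈ φ '' V i}.encard : ENNReal) * F w := by
        rw [ENNReal.tsum_mul_right, ← tsum_subtype, ← ENNReal.tsum_set_one]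
        rfl
    _ ≤ N * F w := by
        gcongr
        exact_mod_cast hcard

lemma abs_det_smul_one (c : ℂ) : |(c • (1 : ℂ →L[ℝ] ℂ)).det| = ‖c‖ ^ 2 := by
  have : (c • (1 : ℂ →L[ℝ] ℂ)).det = ‖c‖ ^ 2 := by
    rw [ContinuousLinearMap.det, ← normSq_eq_norm_sq, ← Algebra.norm_complex_apply,
      Algebra.norm_apply]
    rfl
  rw [this, abs_of_nonneg (by positivity)]

variable {φ f : ℂ → ℂ} {N : ℕ}

lemma exists_mem_nhds_injOn_of_deriv_ne_zero {z : ℂ} (hφ : AnalyticAt ℂ φ z)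
    (hz : deriv φ z ≠ 0) : ∃ U ∈ 𝓝 z, InjOn φ U := by
  have h := hφ.hasStrictDerivAt.hasStrictFDerivAt_equiv hz
  exact ⟨_, (h.toOpenPartialHomeomorph φ).open_source.mem_nhds
    h.mem_toOpenPartialHomeomorph_source, (h.toOpenPartialHomeomorph φ).injOn⟩

lemma lintegral_normSq_deriv_mul_comp_le {U W : Set ℂ} (hU : IsOpen U)
    (hφ : DifferentiableOn ℂ φ U) (hφW : MapsTo φ U W)
    (hN : ∀ w, {z ∈ U | φ z = w}.encard ≤ N) {F : ℂ → ENNReal}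
    (hF : AEMeasurable F (volume.restrict W)) :
    ∫⁻ z in U, ENNReal.ofReal (‖deriv φ z‖ ^ 2) * F (φ z) ≤ N * ∫⁻ w in W, F w := by
  set G : ℂ → ENNReal := fun z => ENNReal.ofReal (‖deriv φ z‖ ^ 2) * F (φ z) with hG
  have hreg : IsOpen (U ∩ deriv φ ⁻¹' {0}ᶜ) :=
    (hφ.deriv hU).continuousOn.isOpen_inter_preimage hU isOpen_compl_singleton
  obtain ⟨V, hVm, hVd, hVU, hVinj⟩ := exists_measurable_partition_injOn hreg.measurableSet
    fun z hz => exists_mem_nhds_injOn_of_deriv_ne_zero (hφ.analyticAt (hU.mem_nhds hz.1)) hz.2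
  have hVsub (i : ℕ) : V i ⊆ U := fun z hz => (hVU.subset (mem_iUnion_of_mem i hz)).1
  have hderiv (i : ℕ) (z : ℂ) (hz : z ∈ V i) :
      HasFDerivWithinAt φ (deriv φ z • (1 : ℂ →L[ℝ] ℂ)) (V i) z :=
    (hφ.differentiableAt (hU.mem_nhds (hVsub i hz))).hasDerivAt.complexToReal_fderiv
      |>.hasFDerivWithinAt
  have himage (i : ℕ) : MeasurableSet (φ '' V i) :=
    measurable_image_of_fderivWithin (hVm i) (hderiv i) (hVinj i)
  have hregular : ∫⁻ z in U, G z = ∫⁻ z in ⋃ i, V i, G z := by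
    rw [hVU, ← lintegral_indicator hU.measurableSet, ← lintegral_indicator hreg.measurableSet]
    congr 1 with z
    by_cases h0 : deriv φ z = 0 <;> by_cases hz : z ∈ U <;> simp [hG, hz, h0]
  calc ∫⁻ z in U, G z
      = ∑' i, ∫⁻ w in φ '' V i, F w := by
        rw [hregular, lintegral_iUnion hVm hVd]
        refine tsum_congr fun i => ?_
        rw [lintegral_image_eq_lintegral_abs_det_fderiv_mul volume (hVm i) (hderiv i) (hVinj i)]
        simp_rw [abs_det_smul_one, hG]
    _ = ∑' i, ∫⁻ w in W, (φ '' V i).indicator F w := by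
        refine tsum_congr fun i => ?_
        rw [setLIntegral_indicator (himage i),
          inter_eq_left.2 (hφW.mono_left (hVsub i)).image_subset]
    _ = ∫⁻ w in W, ∑' i, (φ '' V i).indicator F w :=
        (lintegral_tsum fun i => hF.indicator (himage i)).symm
    _ ≤ ∫⁻ w in W, N * F w := lintegral_mono fun w => tsum_indicator_image_le hVd hVsub (hN w) F
    _ = N * ∫⁻ w in W, F w := lintegral_const_mul' _ _ (ENNReal.natCast_ne_top N)

lemma dirichletIntegral_comp_le (hφ : DifferentiableOn ℂ φ unitDisc)
    (hmaps : MapsTo φ unitDisc unitDisc) (hN : ∀ w, {z ∈ unitDisc | φ z = w}.encard ≤ N)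
    (hf : DifferentiableOn ℂ f unitDisc) :
    dirichletIntegral (fun z => f (φ z)) ≤ N * dirichletIntegral f := by
  have hchain : dirichletIntegral (fun z => f (φ z)) = ∫⁻ z in unitDisc,
      ENNReal.ofReal (‖deriv φ z‖ ^ 2) * ENNReal.ofReal (‖deriv f (φ z)‖ ^ 2) := by
    refine setLIntegral_congr_fun isOpen_unitDisc.measurableSet fun z hz => ?_
    have hcomp : deriv (fun z => f (φ z)) z = deriv f (φ z) * deriv φ z :=
      ((hasDerivAt_of_mem_unitDisc hf (hmaps hz)).comp z (hasDerivAt_of_mem_unitDisc hφ hz)).deriv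
    rw [hcomp, norm_mul, mul_pow, mul_comm, ENNReal.ofReal_mul (by positivity)]
  rw [hchain]
  exact lintegral_normSq_deriv_mul_comp_le isOpen_unitDisc hφ hmaps hN
    ((measurable_deriv f).norm.pow_const 2).ennreal_ofReal.aemeasurable

lemma MemDirichlet.comp (hf : MemDirichlet f) (hφ : DifferentiableOn ℂ φ unitDisc)
    (hmaps : MapsTo φ unitDisc unitDisc) (hN : ∀ w, {z ∈ unitDisc | φ z = w}.encard ≤ N) :
    MemDirichlet fun z => f (φ z) := by
  refine (memDirichlet_iff_dirichletIntegral_ne_top (hf.1.comp hφ hmaps)).2 ?_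
  exact ne_top_of_le_ne_top (ENNReal.mul_ne_top (ENNReal.natCast_ne_top N)
    ((memDirichlet_iff_dirichletIntegral_ne_top hf.1).1 hf))
    (dirichletIntegral_comp_le hφ hmaps hN hf.1)

end AreaFormula

/-- The Hilbert space `ℓ²` of square-summable complex sequences, used as the coefficient space
both of the Hardy space and, after reweighting, of the Dirichlet space. -/
abbrev EllTwo : Type := lp (fun _ : ℕ => ℂ) 2

namespace EllTwo

lemma hasSum_normSq (y : EllTwo) : HasSum (fun n => ‖y n‖ ^ 2) (‖y‖ ^ 2) := by
  simpa using lp.hasSum_norm (p := 2) (by norm_num) y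

open Classical in
/-- The element of `ℓ²` with the given entries; junk value `0` if they are not
square-summable. -/
def ofSeq (a : ℕ → ℂ) : EllTwo := if h : Memℓp a 2 then ⟨a, h⟩ else 0

lemma ofSeq_apply {a : ℕ → ℂ} (ha : Summable fun n => ‖a n‖ ^ 2) (n : ℕ) : ofSeq a n = a n := by
  have hmem : Memℓp a 2 := memℓp_gen (by simpa using ha)
  rw [ofSeq, dif_pos hmem]

end EllTwo

section WeightedKernel

/-- The vector of `ℓ²` with entries `βₙ z̄ⁿ`: the reproducing kernel at `z` of the space of power
series `∑ βₙ yₙ zⁿ`, `y ∈ ℓ²`. -/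
def weightedKernel (β : ℕ → ℝ) (z : ℂ) : EllTwo := EllTwo.ofSeq fun n => β n * conj z ^ n

/-- Evaluation at `z` of the power series `∑ βₙ yₙ zⁿ`, as a functional of `y ∈ ℓ²`. -/
def weightedEval (β : ℕ → ℝ) (z : ℂ) : EllTwo →L[ℂ] ℂ := innerSL ℂ (weightedKernel β z)

variable {β : ℕ → ℝ} {z : ℂ}

lemma summable_normSq_weightedKernel (hβ : ∀ n, |β n| ≤ 1) (hz : ‖z‖ < 1) :
    Summable fun n => ‖(β n : ℂ) * conj z ^ n‖ ^ 2 := by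
  refine Summable.of_nonneg_of_le (fun n => by positivity) (fun n => ?_)
    (summable_geometric_of_lt_one (sq_nonneg ‖z‖) (by nlinarith [norm_nonneg z]))
  rw [norm_mul, mul_pow, norm_pow, norm_conj, norm_real, ← pow_mul, mul_comm n, pow_mul]
  exact mul_le_of_le_one_left (by positivity) (pow_le_one₀ (abs_nonneg _) (hβ n))

lemma hasSum_normSq_weightedKernel (hβ : ∀ n, |β n| ≤ 1) (hz : ‖z‖ < 1) :
    HasSum (fun n => β n ^ 2 * (‖z‖ ^ 2) ^ n) (‖weightedKernel β z‖ ^ 2) := by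
  refine (EllTwo.hasSum_normSq (weightedKernel β z)).congr_fun fun n => ?_
  rw [weightedKernel, EllTwo.ofSeq_apply (summable_normSq_weightedKernel hβ hz), norm_mul,
    mul_pow, norm_pow, norm_conj, norm_real, Real.norm_eq_abs, sq_abs, pow_right_comm]

lemma hasSum_weightedEval (hβ : ∀ n, |β n| ≤ 1) (hz : ‖z‖ < 1) (y : EllTwo) :
    HasSum (fun n => β n * y n * z ^ n) (weightedEval β z y) := by
  refine (lp.hasSum_inner (𝕜 := ℂ) (weightedKernel β z) y).congr_fun fun n => ?_
  rw [weightedKernel, EllTwo.ofSeq_apply (summable_normSq_weightedKernel hβ hz)]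
  simp only [RCLike.inner_apply, map_mul, map_pow, conj_ofReal, conj_conj]
  ring

lemma normSq_weightedEval_le (β : ℕ → ℝ) (z : ℂ) (y : EllTwo) :
    ‖weightedEval β z y‖ ^ 2 ≤ ‖weightedKernel β z‖ ^ 2 * ‖y‖ ^ 2 := by
  rw [← mul_pow]
  exact pow_le_pow_left₀ (norm_nonneg _) (norm_inner_le_norm (𝕜 := ℂ) (weightedKernel β z) y) 2

lemma differentiableOn_weightedEval (hβ : ∀ n, |β n| ≤ 1) (y : EllTwo) :
    DifferentiableOn ℂ (fun z => weightedEval β z y) unitDisc :=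
  differentiableOn_of_hasSum fun _ hz => hasSum_weightedEval hβ hz y

lemma taylorCoeff_weightedEval (hβ : ∀ n, |β n| ≤ 1) (y : EllTwo) (n : ℕ) :
    taylorCoeff (fun z => weightedEval β z y) n = β n * y n :=
  taylorCoeff_eq_of_hasSum (fun _ hz => hasSum_weightedEval hβ hz y) n

end WeightedKernel

section DirichletModel

/-- The weights for which `y ↦ ∑ βₙ yₙ zⁿ` is an isometry of `ℓ²` onto the Dirichlet space. -/
def dirichletWeight (n : ℕ) : ℝ := (√(max 1 n))⁻¹

/-- Evaluation at `z` on the Dirichlet space, in the coordinates of `ℓ²`. -/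
abbrev dirichletEval (z : ℂ) : EllTwo →L[ℂ] ℂ := weightedEval dirichletWeight z

variable {f : ℂ → ℂ} {y : EllTwo} {z : ℂ}

lemma dirichletWeight_sq (n : ℕ) : dirichletWeight n ^ 2 = (max 1 (n : ℝ))⁻¹ := by
  rw [dirichletWeight, inv_pow, Real.sq_sqrt (by positivity)]

lemma dirichletWeight_pos (n : ℕ) : 0 < dirichletWeight n := by
  rw [dirichletWeight]
  positivity

lemma abs_dirichletWeight_le (n : ℕ) : |dirichletWeight n| ≤ 1 := by
  rw [abs_of_pos (dirichletWeight_pos n)]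
  exact inv_le_one_of_one_le₀ (Real.one_le_sqrt.2 (le_max_left _ _))

lemma normSq_dirichletKernel (hz : ‖z‖ < 1) :
    ‖weightedKernel dirichletWeight z‖ ^ 2 = 1 - Real.log (1 - ‖z‖ ^ 2) := by
  have hz2 : |‖z‖ ^ 2| < 1 := by
    rw [abs_of_nonneg (by positivity)]
    nlinarith [norm_nonneg z]
  refine (hasSum_normSq_weightedKernel abs_dirichletWeight_le hz).unique
    ((hasSum_nat_add_iff' 1).1 ?_)
  simp only [Finset.range_one, Finset.sum_singleton, dirichletWeight_sq, CharP.cast_eq_zero,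
    pow_zero, zero_le_one, sup_of_le_left, inv_one, mul_one, sub_sub_cancel_left]
  refine (Real.hasSum_pow_div_log_of_abs_lt_one hz2).congr_fun fun n => ?_
  rw [max_eq_right (by exact_mod_cast n.succ_pos), Nat.cast_succ, div_eq_inv_mul]

lemma hasSum_max_mul_normSq (y : EllTwo) :
    HasSum (fun n : ℕ => max 1 (n : ℝ) * ‖(dirichletWeight n : ℂ) * y n‖ ^ 2) (‖y‖ ^ 2) := by
  refine (EllTwo.hasSum_normSq y).congr_fun fun n => ?_
  rw [norm_mul, mul_pow, norm_real, Real.norm_eq_abs, sq_abs, dirichletWeight_sq]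
  field_simp

lemma memDirichlet_iff_summable_max (hf : DifferentiableOn ℂ f unitDisc) :
    MemDirichlet f ↔ Summable fun n : ℕ => max 1 (n : ℝ) * ‖taylorCoeff f n‖ ^ 2 := by
  rw [memDirichlet_iff_summable hf, ← summable_nat_add_iff 1, ← summable_nat_add_iff 1
    (f := fun n : ℕ => max 1 (n : ℝ) * ‖taylorCoeff f n‖ ^ 2)]
  simp

lemma dirNormSq_eq_tsum_max (hf : MemDirichlet f) :
    dirNormSq f = ∑' n : ℕ, max 1 (n : ℝ) * ‖taylorCoeff f n‖ ^ 2 := by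
  rw [dirNormSq_eq_tsum hf, ((memDirichlet_iff_summable hf.1).1 hf).tsum_eq_zero_add,
    ((memDirichlet_iff_summable_max hf.1).1 hf).tsum_eq_zero_add]
  simp

lemma memDirichlet_dirichletEval (y : EllTwo) : MemDirichlet fun z => dirichletEval z y := by
  refine (memDirichlet_iff_summable_max
    (differentiableOn_weightedEval abs_dirichletWeight_le y)).2 ?_
  simpa only [taylorCoeff_weightedEval abs_dirichletWeight_le]
    using (hasSum_max_mul_normSq y).summable

lemma dirNormSq_dirichletEval (y : EllTwo) : dirNormSq (fun z => dirichletEval z y) = ‖y‖ ^ 2 := by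
  rw [dirNormSq_eq_tsum_max (memDirichlet_dirichletEval y)]
  simpa only [taylorCoeff_weightedEval abs_dirichletWeight_le]
    using (hasSum_max_mul_normSq y).tsum_eq

lemma MemDirichlet.exists_dirichletEval_eq (hf : MemDirichlet f) :
    ∃ y : EllTwo, EqOn (fun z => dirichletEval z y) f unitDisc := by
  have hsum : Summable fun n => ‖(((dirichletWeight n)⁻¹ : ℝ) : ℂ) * taylorCoeff f n‖ ^ 2 := by
    refine ((memDirichlet_iff_summable_max hf.1).1 hf).congr fun n => ?_
    rw [norm_mul, mul_pow, norm_real, Real.norm_eq_abs, sq_abs, inv_pow, dirichletWeight_sq,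
      inv_inv]
  refine ⟨EllTwo.ofSeq fun n => ((dirichletWeight n)⁻¹ : ℝ) * taylorCoeff f n, fun z hz => ?_⟩
  refine (hasSum_weightedEval abs_dirichletWeight_le (mem_unitDisc.1 hz) _).unique
    ((hasSum_taylorCoeff hf.1 (mem_unitDisc.1 hz)).congr_fun fun n => ?_)
  have : (dirichletWeight n : ℂ) ≠ 0 := by exact_mod_cast (dirichletWeight_pos n).ne'
  rw [EllTwo.ofSeq_apply hsum, ofReal_inv]
  field_simp

lemma dirichletEval_injOn {y₁ y₂ : EllTwo}
    (h : EqOn (fun z => dirichletEval z y₁) (fun z => dirichletEval z y₂) unitDisc) :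
    y₁ = y₂ := by
  rw [← sub_eq_zero, ← norm_eq_zero, ← sq_eq_zero_iff, ← dirNormSq_dirichletEval,
    dirNormSq_congr (g := fun _ => 0) fun z hz => by simpa [sub_eq_zero] using h hz]
  simp [dirNormSq]

lemma MemDirichlet.normSq_le (hf : MemDirichlet f) (hz : ‖z‖ < 1) :
    ‖f z‖ ^ 2 ≤ (1 - Real.log (1 - ‖z‖ ^ 2)) * dirNormSq f := by
  obtain ⟨y, hy⟩ := hf.exists_dirichletEval_eq
  rw [← dirNormSq_congr hy, ← hy (mem_unitDisc.2 hz), ← normSq_dirichletKernel hz,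
    dirNormSq_dirichletEval]
  exact normSq_weightedEval_le _ z y

lemma exists_dirichlet_reproducingKernel {w : ℂ} (hw : ‖w‖ < 1) :
    ∃ f : ℂ → ℂ, MemDirichlet f ∧ dirNormSq f = 1 - Real.log (1 - ‖w‖ ^ 2) ∧
      f w = ((1 - Real.log (1 - ‖w‖ ^ 2) : ℝ) : ℂ) := by
  refine ⟨fun z => dirichletEval z (weightedKernel dirichletWeight w),
    memDirichlet_dirichletEval _, ?_, ?_⟩
  · rw [dirNormSq_dirichletEval, normSq_dirichletKernel hw]
  · rw [← normSq_dirichletKernel hw, ofReal_pow]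
    exact inner_self_eq_norm_sq_to_K (𝕜 := ℂ) (weightedKernel dirichletWeight w)

end DirichletModel

section WeightedComposition

variable {u φ : ℂ → ℂ}

lemma exists_clm_dirichletEval_eq_mul (hu : u ∈ dirichletMultipliers) :
    ∃ T : EllTwo →L[ℂ] EllTwo, ∀ y, ∀ z ∈ unitDisc,
      dirichletEval z (T y) = u z * dirichletEval z y := by
  choose T hT using fun y =>
    (hu.2 _ (memDirichlet_dirichletEval y)).exists_dirichletEval_eq
  let T' : EllTwo →ₗ[ℂ] EllTwo :=
    { toFun := T
      map_add' := fun y₁ y₂ => dirichletEval_injOn fun z hz => by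
        simp only [map_add, hT _ hz, mul_add]
      map_smul' := fun c y => dirichletEval_injOn fun z hz => by
        simp only [RingHom.id_apply, map_smul, hT _ hz, smul_eq_mul, mul_left_comm] }
  refine ⟨⟨T', T'.continuous_of_seq_closed_graph fun v x y hv hTv => ?_⟩, fun y z hz => hT y hz⟩
  refine dirichletEval_injOn fun z hz => ?_
  have hlim := (((dirichletEval z).continuous.tendsto x).comp hv).const_mul (u z)
  refine tendsto_nhds_unique (((dirichletEval z).continuous.tendsto y).comp hTv) ?_
  simpa only [Function.comp_def, T', LinearMap.coe_mk, AddHom.coe_mk, hT _ hz] using hlim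

lemma wcoBounded_id_of_mem_dirichletMultipliers (hu : u ∈ dirichletMultipliers) :
    WCOBounded u id := by
  obtain ⟨T, hT⟩ := exists_clm_dirichletEval_eq_mul hu
  refine ⟨‖T‖ ^ 2, by positivity, fun f hf => ⟨hu.2 f hf, ?_⟩⟩
  obtain ⟨y, hy⟩ := hf.exists_dirichletEval_eq
  have huf : EqOn (fun z => dirichletEval z (T y)) (fun z => u z * f (id z)) unitDisc :=
    fun z hz => by simp only [hT y z hz, id, ← hy hz]
  rw [← dirNormSq_congr huf, ← dirNormSq_congr hy, dirNormSq_dirichletEval,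
    dirNormSq_dirichletEval, ← mul_pow]
  exact pow_le_pow_left₀ (norm_nonneg _) (T.le_opNorm y) 2

lemma wcoBounded_one_of_encard_fiber_le {N : ℕ} (hφ : DifferentiableOn ℂ φ unitDisc)
    (hmaps : MapsTo φ unitDisc unitDisc) (hN : ∀ w, {z ∈ unitDisc | φ z = w}.encard ≤ N) :
    WCOBounded (fun _ => 1) φ := by
  have h0 : ‖φ 0‖ < 1 := mem_unitDisc.1 (hmaps (mem_unitDisc.2 (by simp)))
  set K := 1 - Real.log (1 - ‖φ 0‖ ^ 2) with hK
  have hK0 : 0 ≤ K := by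
    rw [hK, ← normSq_dirichletKernel h0]
    positivity
  refine ⟨K + N, by positivity, fun f hf => ?_⟩
  simp only [one_mul]
  refine ⟨hf.comp hφ hmaps hN, ?_⟩
  have hle := ENNReal.toReal_mono (ENNReal.mul_ne_top (ENNReal.natCast_ne_top N)
    ((memDirichlet_iff_dirichletIntegral_ne_top hf.1).1 hf))
    (dirichletIntegral_comp_le hφ hmaps hN hf.1)
  rw [ENNReal.toReal_mul, ENNReal.toReal_natCast] at hle
  calc dirNormSq (fun z => f (φ z))
      = ‖f (φ 0)‖ ^ 2 + 1 / Real.pi * (dirichletIntegral fun z => f (φ z)).toReal :=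
        dirNormSq_eq_dirichletIntegral _
    _ ≤ K * dirNormSq f + 1 / Real.pi * (N * (dirichletIntegral f).toReal) := by
        gcongr
        exact hf.normSq_le h0
    _ ≤ K * dirNormSq f + N * dirNormSq f := by
        rw [dirNormSq_eq_dirichletIntegral f]
        nlinarith [mul_nonneg (Nat.cast_nonneg (α := ℝ) N) (sq_nonneg ‖f 0‖)]
    _ = (K + N) * dirNormSq f := by ring

lemma WCOBounded.of_id (hu : WCOBounded u id) (hφ : WCOBounded (fun _ => 1) φ) :
    WCOBounded u φ := by
  obtain ⟨C, hC0, hC⟩ := hu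
  obtain ⟨D, hD0, hD⟩ := hφ
  refine ⟨C * D, by positivity, fun f hf => ?_⟩
  obtain ⟨hfφ, hnorm⟩ := hD f hf
  simp only [one_mul] at hfφ hnorm
  refine ⟨(hC _ hfφ).1, (hC _ hfφ).2.trans ?_⟩
  rw [mul_assoc]
  exact mul_le_mul_of_nonneg_left hnorm hC0

lemma one_sub_log_le_of_le_mul {s t M : ℝ} (hs : 0 < s) (ht : 0 < t) (hs1 : s ≤ 1) (hM : 1 ≤ M)
    (hst : s ≤ M * t) : 1 - Real.log t ≤ (1 + Real.log M) * (1 - Real.log s) := by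
  have hlog := Real.log_le_log hs hst
  rw [Real.log_mul (by linarith) ht.ne'] at hlog
  nlinarith [mul_nonneg (Real.log_nonneg hM) (neg_nonneg.2 (Real.log_nonpos hs.le hs1))]

-- Testing on reproducing kernels at `φ z` bounds `|u z|²` by a ratio of the kernels' norms at `z`
-- and `φ z`.
lemma WCOBounded.exists_norm_le {M : ℝ} (hu : WCOBounded u φ) (hmaps : MapsTo φ unitDisc unitDisc)
    (hM1 : 1 ≤ M) (hM : ∀ z : ℂ, ‖z‖ < 1 → 1 - ‖φ z‖ ^ 2 ≤ M * (1 - ‖z‖ ^ 2)) :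
    ∃ K : ℝ, ∀ z : ℂ, ‖z‖ < 1 → ‖u z‖ ≤ K := by
  obtain ⟨C, _, hC⟩ := hu
  refine ⟨√(C * (1 + Real.log M)), fun z hz => Real.le_sqrt_of_sq_le ?_⟩
  have hw : ‖φ z‖ < 1 := mem_unitDisc.1 (hmaps (mem_unitDisc.2 hz))
  have hpos {w : ℂ} (hw : ‖w‖ < 1) : 0 < 1 - ‖w‖ ^ 2 := by nlinarith [norm_nonneg w]
  obtain ⟨f, hf, hf_norm, hf_eval⟩ := exists_dirichlet_reproducingKernel hw
  set K := 1 - Real.log (1 - ‖φ z‖ ^ 2)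
  have hK1 : 1 ≤ K := by
    have := Real.log_nonpos (hpos hw).le (by nlinarith [norm_nonneg (φ z)])
    linarith
  have hratio : 1 - Real.log (1 - ‖z‖ ^ 2) ≤ (1 + Real.log M) * K :=
    one_sub_log_le_of_le_mul (hpos hw) (hpos hz) (by nlinarith [norm_nonneg (φ z)]) hM1 (hM z hz)
  have hlogM := Real.log_nonneg hM1
  refine le_of_mul_le_mul_right ?_ (show 0 < K ^ 2 by positivity)
  calc ‖u z‖ ^ 2 * K ^ 2 = ‖u z * f (φ z)‖ ^ 2 := by
        rw [hf_eval, norm_mul, norm_real, Real.norm_of_nonneg (by linarith), mul_pow]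
    _ ≤ (1 - Real.log (1 - ‖z‖ ^ 2)) * dirNormSq fun z => u z * f (φ z) :=
        (hC f hf).1.normSq_le hz
    _ ≤ ((1 + Real.log M) * K) * (C * K) :=
        mul_le_mul hratio (hf_norm ▸ (hC f hf).2) (dirNormSq_nonneg _) (by positivity)
    _ = C * (1 + Real.log M) * K ^ 2 := by ring

end WeightedComposition

section BlaschkeFactor

/-- The involutive automorphism `z ↦ (a - z) / (1 - āz)` of the disc. -/
def blaschkeFactor (a z : ℂ) : ℂ := (a - z) / (1 - conj a * z)

variable {a b z : ℂ}

lemma one_sub_norm_le_norm_one_sub_conj_mul (a : ℂ) (hz : ‖z‖ ≤ 1) :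
    1 - ‖a‖ ≤ ‖1 - conj a * z‖ := by
  have := norm_sub_norm_le (1 : ℂ) (conj a * z)
  rw [norm_mul, norm_conj, norm_one] at this
  nlinarith [norm_nonneg a]

lemma one_sub_conj_mul_ne_zero (ha : ‖a‖ < 1) (hz : ‖z‖ ≤ 1) : 1 - conj a * z ≠ 0 :=
  norm_pos_iff.1 ((sub_pos.2 ha).trans_le (one_sub_norm_le_norm_one_sub_conj_mul a hz))

lemma differentiableOn_blaschkeFactor (ha : ‖a‖ < 1) :
    DifferentiableOn ℂ (blaschkeFactor a) unitDisc := by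
  unfold blaschkeFactor
  exact DifferentiableOn.div (by fun_prop) (by fun_prop) fun z hz =>
    one_sub_conj_mul_ne_zero ha (mem_unitDisc.1 hz).le

lemma blaschkeFactor_self (a : ℂ) : blaschkeFactor a a = 0 := by simp [blaschkeFactor]

lemma one_sub_normSq_blaschkeFactor_mul (ha : ‖a‖ < 1) (hz : ‖z‖ < 1) :
    (1 - ‖blaschkeFactor a z‖ ^ 2) * ‖1 - conj a * z‖ ^ 2 = (1 - ‖a‖ ^ 2) * (1 - ‖z‖ ^ 2) := by
  have hd : ‖1 - conj a * z‖ ≠ 0 := norm_ne_zero_iff.2 (one_sub_conj_mul_ne_zero ha hz.le)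
  rw [blaschkeFactor, norm_div, div_pow, sub_mul, div_mul_cancel₀ _ (pow_ne_zero 2 hd)]
  simp only [← normSq_eq_norm_sq, normSq_apply, sub_re, sub_im, mul_re, mul_im, conj_re, conj_im,
    one_re, one_im]
  ring

lemma norm_blaschkeFactor_lt_one (ha : ‖a‖ < 1) (hz : ‖z‖ < 1) : ‖blaschkeFactor a z‖ < 1 := by
  have h := one_sub_normSq_blaschkeFactor_mul ha hz
  have hrhs : 0 < (1 - ‖a‖ ^ 2) * (1 - ‖z‖ ^ 2) :=
    mul_pos (by nlinarith [norm_nonneg a]) (by nlinarith [norm_nonneg z])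
  have := pos_of_mul_pos_left (h ▸ hrhs) (sq_nonneg _)
  nlinarith [norm_nonneg (blaschkeFactor a z)]

lemma one_sub_normSq_blaschkeFactor_le (ha : ‖a‖ < 1) (hz : ‖z‖ < 1) :
    1 - ‖blaschkeFactor a z‖ ^ 2 ≤ 1 / (1 - ‖a‖) ^ 2 * (1 - ‖z‖ ^ 2) := by
  have hlt := norm_blaschkeFactor_lt_one ha hz
  have : 0 < 1 - ‖a‖ := sub_pos.2 ha
  rw [div_mul_eq_mul_div, one_mul, le_div_iff₀ (by positivity)]
  calc (1 - ‖blaschkeFactor a z‖ ^ 2) * (1 - ‖a‖) ^ 2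
      ≤ (1 - ‖blaschkeFactor a z‖ ^ 2) * ‖1 - conj a * z‖ ^ 2 := by
        have : 0 ≤ 1 - ‖blaschkeFactor a z‖ ^ 2 := by
          nlinarith [norm_nonneg (blaschkeFactor a z)]
        gcongr
        exact one_sub_norm_le_norm_one_sub_conj_mul a hz.le
    _ = (1 - ‖a‖ ^ 2) * (1 - ‖z‖ ^ 2) := one_sub_normSq_blaschkeFactor_mul ha hz
    _ ≤ 1 - ‖z‖ ^ 2 :=
        mul_le_of_le_one_left (by nlinarith [norm_nonneg z]) (by nlinarith [norm_nonneg a])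

lemma blaschkeFactor_blaschkeFactor (ha : ‖a‖ < 1) (hz : ‖z‖ < 1) :
    blaschkeFactor a (blaschkeFactor a z) = z := by
  have hd := one_sub_conj_mul_ne_zero ha hz.le
  have hd₂ := one_sub_conj_mul_ne_zero ha (norm_blaschkeFactor_lt_one ha hz).le
  have hmul : blaschkeFactor a z * (1 - conj a * z) = a - z := div_mul_cancel₀ _ hd
  rw [blaschkeFactor, div_eq_iff hd₂]
  linear_combination -hmul

-- Both sides are automorphisms of the disc with the same zero.
lemma exists_norm_eq_one_blaschkeFactor_comp (ha : ‖a‖ < 1) (hb : ‖b‖ < 1) :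
    ∃ l : ℂ, ‖l‖ = 1 ∧ ∀ z, ‖z‖ < 1 →
      blaschkeFactor b (blaschkeFactor a z) = l * blaschkeFactor (blaschkeFactor a b) z := by
  have hab := one_sub_conj_mul_ne_zero ha hb.le
  have hba := one_sub_conj_mul_ne_zero hb ha.le
  have hconj : conj (1 - conj b * a) = 1 - conj a * b := by simp [mul_comm]
  refine ⟨-(1 - conj a * b) / (1 - conj b * a), ?_, fun z hz => ?_⟩
  · rw [norm_div, norm_neg, ← norm_conj (1 - conj b * a), hconj,
      div_self (norm_ne_zero_iff.2 hab)]
  · have hz' := one_sub_conj_mul_ne_zero ha hz.le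
    have hd₁ := one_sub_conj_mul_ne_zero hb (norm_blaschkeFactor_lt_one ha hz).le
    have hd₂ := one_sub_conj_mul_ne_zero (norm_blaschkeFactor_lt_one ha hb) hz.le
    have hx : blaschkeFactor a z * (1 - conj a * z) = a - z := div_mul_cancel₀ _ hz'
    have hc : blaschkeFactor a b * (1 - conj a * b) = a - b := div_mul_cancel₀ _ hab
    have hc' : conj (blaschkeFactor a b) * (1 - conj b * a) = conj a - conj b := by
      rw [← map_sub, ← hc, map_mul, ← hconj, conj_conj]
    have hnum : (b - blaschkeFactor a z) * (1 - conj a * z)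
        = -(1 - conj a * b) * (blaschkeFactor a b - z) := by linear_combination hc - hx
    have hden : (1 - conj b * a) * (1 - conj (blaschkeFactor a b) * z)
        = (1 - conj b * blaschkeFactor a z) * (1 - conj a * z) := by
      linear_combination conj b * hx - z * hc'
    rw [blaschkeFactor, blaschkeFactor.eq_1 (blaschkeFactor a b), div_mul_div_comm,
      div_eq_div_iff hd₁ (mul_ne_zero hba hd₂)]
    refine mul_right_cancel₀ hz' ?_
    rw [hden, mul_right_comm, hnum]
    ring

end BlaschkeFactor

section BlaschkeProduct

/-- The product of `κ` and the Blaschke factors of `a 0, …, a (n - 1)`: the form in which finite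
Blaschke products are handled below, the zeros being the initial segment of a sequence. -/
def blaschkeProduct (κ : ℂ) (a : ℕ → ℂ) (n : ℕ) (z : ℂ) : ℂ :=
  κ * ∏ j ∈ Finset.range n, blaschkeFactor (a j) z

variable {κ : ℂ} {a : ℕ → ℂ} {n : ℕ} {z : ℂ}

lemma IsFiniteBlaschke.exists_eqOn_blaschkeProduct {φ : ℂ → ℂ} (hφ : IsFiniteBlaschke φ) :
    ∃ (κ : ℂ) (a : ℕ → ℂ) (n : ℕ), ‖κ‖ = 1 ∧ (∀ j, ‖a j‖ < 1) ∧
      EqOn φ (blaschkeProduct κ a n) unitDisc := by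
  obtain ⟨θ, n, a, ha, hφ⟩ := hφ
  refine ⟨exp (θ * I), fun j => if h : j < n then a ⟨j, h⟩ else 0, n, norm_exp_ofReal_mul_I θ,
    fun j => ?_, fun z hz => ?_⟩
  · by_cases h : j < n <;> simp [h, ha]
  · rw [hφ z hz, blaschkeProduct, Finset.prod_range]
    simp only [Fin.is_lt, dite_true, Fin.eta, blaschkeFactor]

lemma differentiableOn_blaschkeProduct (κ : ℂ) (ha : ∀ j, ‖a j‖ < 1) (n : ℕ) :
    DifferentiableOn ℂ (blaschkeProduct κ a n) unitDisc :=
  (DifferentiableOn.fun_finsetProd fun j _ => differentiableOn_blaschkeFactor (ha j)).const_mul κ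

lemma norm_prod_blaschkeFactor_le_one (ha : ∀ j, ‖a j‖ < 1) (n : ℕ) (hz : ‖z‖ < 1) :
    ‖∏ j ∈ Finset.range n, blaschkeFactor (a j) z‖ ≤ 1 := by
  rw [norm_prod]
  exact Finset.prod_le_one (fun _ _ => norm_nonneg _) fun j _ =>
    (norm_blaschkeFactor_lt_one (ha j) hz).le

lemma norm_blaschkeProduct_lt_one (hκ : ‖κ‖ = 1) (ha : ∀ j, ‖a j‖ < 1) (hn : n ≠ 0)
    (hz : ‖z‖ < 1) : ‖blaschkeProduct κ a n z‖ < 1 := by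
  obtain ⟨m, rfl⟩ := Nat.exists_eq_succ_of_ne_zero hn
  rw [blaschkeProduct, norm_mul, hκ, one_mul, Finset.prod_range_succ, norm_mul]
  exact mul_lt_one_of_nonneg_of_lt_one_right (norm_prod_blaschkeFactor_le_one ha m hz)
    (norm_nonneg _) (norm_blaschkeFactor_lt_one (ha m) hz)

lemma one_sub_prod_le_sum_one_sub {ι : Type*} (s : Finset ι) {x : ι → ℝ}
    (h0 : ∀ i ∈ s, 0 ≤ x i) (h1 : ∀ i ∈ s, x i ≤ 1) :
    1 - ∏ i ∈ s, x i ≤ ∑ i ∈ s, (1 - x i) := by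
  classical
  induction s using Finset.induction_on with
  | empty => simp
  | insert i s hi ih =>
    rw [Finset.forall_mem_insert] at h0 h1
    rw [Finset.prod_insert hi, Finset.sum_insert hi]
    nlinarith [ih h0.2 h1.2, Finset.prod_le_one h0.2 h1.2]

lemma exists_one_sub_normSq_blaschkeProduct_le (hκ : ‖κ‖ = 1) (ha : ∀ j, ‖a j‖ < 1) (n : ℕ) :
    ∃ M : ℝ, 1 ≤ M ∧
      ∀ z : ℂ, ‖z‖ < 1 → 1 - ‖blaschkeProduct κ a n z‖ ^ 2 ≤ M * (1 - ‖z‖ ^ 2) := by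
  refine ⟨1 + ∑ j ∈ Finset.range n, 1 / (1 - ‖a j‖) ^ 2,
    le_add_of_nonneg_right (Finset.sum_nonneg fun _ _ => by positivity), fun z hz => ?_⟩
  calc 1 - ‖blaschkeProduct κ a n z‖ ^ 2
      = 1 - ∏ j ∈ Finset.range n, ‖blaschkeFactor (a j) z‖ ^ 2 := by
        rw [blaschkeProduct, norm_mul, hκ, one_mul, norm_prod, Finset.prod_pow]
    _ ≤ ∑ j ∈ Finset.range n, (1 - ‖blaschkeFactor (a j) z‖ ^ 2) :=
        one_sub_prod_le_sum_one_sub _ (fun _ _ => by positivity) fun j _ =>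
          pow_le_one₀ (norm_nonneg _) (norm_blaschkeFactor_lt_one (ha j) hz).le
    _ ≤ ∑ j ∈ Finset.range n, 1 / (1 - ‖a j‖) ^ 2 * (1 - ‖z‖ ^ 2) :=
        Finset.sum_le_sum fun j _ => one_sub_normSq_blaschkeFactor_le (ha j) hz
    _ ≤ (1 + ∑ j ∈ Finset.range n, 1 / (1 - ‖a j‖) ^ 2) * (1 - ‖z‖ ^ 2) := by
        rw [← Finset.sum_mul]
        nlinarith [norm_nonneg z]

open Polynomial in
/-- The polynomial whose roots in the disc are the solutions of `blaschkeProduct κ a n z = w`. -/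
def fiberPolynomial (κ : ℂ) (a : ℕ → ℂ) (n : ℕ) (w : ℂ) : ℂ[X] :=
  C κ * ∏ j ∈ Finset.range n, (C (a j) - X) -
    C w * ∏ j ∈ Finset.range n, (1 - C (conj (a j)) * X)

lemma eval_fiberPolynomial (κ : ℂ) (a : ℕ → ℂ) (n : ℕ) (w z : ℂ) :
    (fiberPolynomial κ a n w).eval z = κ * ∏ j ∈ Finset.range n, (a j - z) -
      w * ∏ j ∈ Finset.range n, (1 - conj (a j) * z) := by
  simp [fiberPolynomial, Polynomial.eval_prod]

lemma natDegree_fiberPolynomial_le (κ : ℂ) (a : ℕ → ℂ) (n : ℕ) (w : ℂ) :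
    (fiberPolynomial κ a n w).natDegree ≤ n := by
  have hprod {q : ℕ → Polynomial ℂ} (hq : ∀ j, (q j).natDegree ≤ 1) :
      (∏ j ∈ Finset.range n, q j).natDegree ≤ n :=
    (Polynomial.natDegree_prod_le _ _).trans
      ((Finset.sum_le_sum fun j _ => hq j).trans (by simp))
  refine (Polynomial.natDegree_sub_le _ _).trans (max_le ?_ ?_) <;>
  refine (Polynomial.natDegree_C_mul_le _ _).trans (hprod fun j => ?_) <;>
  compute_degree

lemma fiberPolynomial_ne_zero (hκ : ‖κ‖ = 1) (ha : ∀ j, ‖a j‖ < 1) (n : ℕ) {w : ℂ}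
    (hw : ‖w‖ < 1) : fiberPolynomial κ a n w ≠ 0 := by
  intro h
  have heval := congrArg norm (sub_eq_zero.1 (eval_fiberPolynomial κ a n w 1 ▸
    h.symm ▸ Polynomial.eval_zero))
  have hnorm (j : ℕ) : ‖a j - 1‖ = ‖1 - conj (a j) * 1‖ := by
    rw [← norm_conj, norm_sub_rev]
    simp
  simp only [norm_mul, norm_prod, hκ, one_mul, hnorm] at heval
  have hpos : 0 < ∏ j ∈ Finset.range n, ‖1 - conj (a j) * 1‖ :=
    Finset.prod_pos fun j _ => norm_pos_iff.2 (one_sub_conj_mul_ne_zero (ha j) norm_one.le)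
  nlinarith

lemma encard_fiber_blaschkeProduct_le (hκ : ‖κ‖ = 1) (ha : ∀ j, ‖a j‖ < 1) (hn : n ≠ 0) (w : ℂ) :
    {z ∈ unitDisc | blaschkeProduct κ a n z = w}.encard ≤ n := by
  classical
  rcases lt_or_ge ‖w‖ 1 with hw | hw
  · have hsub : {z ∈ unitDisc | blaschkeProduct κ a n z = w} ⊆
        ((fiberPolynomial κ a n w).roots.toFinset : Set ℂ) := by
      rintro z ⟨hz, rfl⟩
      rw [Finset.mem_coe, Multiset.mem_toFinset,
        Polynomial.mem_roots (fiberPolynomial_ne_zero hκ ha n hw), Polynomial.IsRoot.def,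
        eval_fiberPolynomial]
      simp only [blaschkeProduct, blaschkeFactor]
      rw [Finset.prod_div_distrib, mul_assoc, div_mul_cancel₀, sub_self]
      exact Finset.prod_ne_zero_iff.2 fun j _ =>
        one_sub_conj_mul_ne_zero (ha j) (mem_unitDisc.1 hz).le
    refine (encard_le_encard hsub).trans ?_
    rw [encard_coe_eq_coe_finsetCard, Nat.cast_le]
    exact (Multiset.toFinset_card_le _).trans
      ((Polynomial.card_roots' _).trans (natDegree_fiberPolynomial_le κ a n w))
  · rw [eq_empty_of_forall_notMem (s := {z ∈ unitDisc | blaschkeProduct κ a n z = w})]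
    · simp
    · rintro z ⟨hz, rfl⟩
      exact hw.not_gt (norm_blaschkeProduct_lt_one hκ ha hn (mem_unitDisc.1 hz))

end BlaschkeProduct

section HardySpace

/-- Evaluation at `z` on the Hardy space, in the coordinates of `ℓ²`. -/
abbrev hardyEval (z : ℂ) : EllTwo →L[ℂ] ℂ := weightedEval (fun _ => 1) z

variable {f : ℂ → ℂ} {z : ℂ}

lemma hasSum_hardyEval (hz : ‖z‖ < 1) (y : EllTwo) :
    HasSum (fun n => y n * z ^ n) (hardyEval z y) := by
  simpa using hasSum_weightedEval (β := fun _ => 1) (by simp) hz y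

lemma normSq_hardyKernel (hz : ‖z‖ < 1) :
    ‖weightedKernel (fun _ => 1) z‖ ^ 2 = (1 - ‖z‖ ^ 2)⁻¹ := by
  refine (hasSum_normSq_weightedKernel (by simp) hz).unique ?_
  simpa using hasSum_geometric_of_lt_one (sq_nonneg ‖z‖) (by nlinarith [norm_nonneg z])

lemma hardyEval_ofSeq_taylorCoeff (hf : MemHardy f) (hz : ‖z‖ < 1) :
    hardyEval z (EllTwo.ofSeq (taylorCoeff f)) = f z := by
  refine (hasSum_hardyEval hz _).unique ?_
  simpa only [EllTwo.ofSeq_apply hf.2] using hasSum_taylorCoeff hf.1 hz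

lemma summable_normSq_of_summable_natCast_mul {a : ℕ → ℂ}
    (ha : Summable fun n : ℕ => (n : ℝ) * ‖a n‖ ^ 2) : Summable fun n => ‖a n‖ ^ 2 := by
  refine (summable_nat_add_iff 1).1 (Summable.of_nonneg_of_le (fun n => by positivity)
    (fun n => ?_) ((summable_nat_add_iff 1).2 ha))
  push_cast
  nlinarith [mul_nonneg (Nat.cast_nonneg (α := ℝ) n) (sq_nonneg ‖a (n + 1)‖)]

lemma MemDirichlet.memHardy (hf : MemDirichlet f) : MemHardy f :=
  ⟨hf.1, summable_normSq_of_summable_natCast_mul ((memDirichlet_iff_summable hf.1).1 hf)⟩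

lemma memDirichlet_hardyEval {y : EllTwo} (hy : Summable fun n : ℕ => (n : ℝ) * ‖y n‖ ^ 2) :
    MemDirichlet fun w => hardyEval w y := by
  refine (memDirichlet_iff_summable (differentiableOn_weightedEval (by simp) _)).2 ?_
  simpa only [taylorCoeff_weightedEval (β := fun _ => 1) (by simp), ofReal_one, one_mul] using hy

end HardySpace

section BackwardShift

lemma EllTwo.memℓp_shift (y : EllTwo) : Memℓp (fun n => y (n + 1)) 2 :=
  memℓp_gen (by simpa using (summable_nat_add_iff 1).2 y.hasSum_normSq.summable)

lemma EllTwo.normSq_eq_add_normSq_shift (y : EllTwo) :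
    ‖y‖ ^ 2 = ‖y 0‖ ^ 2 + ‖(⟨_, y.memℓp_shift⟩ : EllTwo)‖ ^ 2 := by
  rw [← y.hasSum_normSq.tsum_eq, y.hasSum_normSq.summable.tsum_eq_zero_add,
    ← (EllTwo.hasSum_normSq ⟨_, y.memℓp_shift⟩).tsum_eq]

/-- The backward shift `S*`, `(S* y)ₙ = yₙ₊₁`; on power series, `f ↦ (f - f 0) / z`. -/
def backwardShift : EllTwo →L[ℂ] EllTwo :=
  LinearMap.mkContinuous
    { toFun := fun y => ⟨fun n => y (n + 1), y.memℓp_shift⟩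
      map_add' := fun _ _ => rfl
      map_smul' := fun _ _ => rfl } 1 fun y => by
    rw [one_mul]
    exact le_of_sq_le_sq ((le_add_of_nonneg_left (sq_nonneg _)).trans_eq
      y.normSq_eq_add_normSq_shift.symm) (norm_nonneg y)

lemma norm_backwardShift_le : ‖backwardShift‖ ≤ 1 := LinearMap.mkContinuous_norm_le _ zero_le_one _

variable {y : EllTwo} {D : ℝ}

lemma backwardShift_apply (y : EllTwo) (n : ℕ) : backwardShift y n = y (n + 1) := rfl

lemma normSq_eq_add_normSq_backwardShift (y : EllTwo) :
    ‖y‖ ^ 2 = ‖y 0‖ ^ 2 + ‖backwardShift y‖ ^ 2 := y.normSq_eq_add_normSq_shift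

lemma backwardShift_pow_apply (y : EllTwo) (k n : ℕ) : (backwardShift ^ k) y n = y (n + k) := by
  induction k generalizing n with
  | zero => rfl
  | succ k ih =>
    rw [pow_succ', mul_apply_eq_comp, backwardShift_apply, ih, add_right_comm, add_assoc]

lemma hardyEval_eq_add_mul_backwardShift {z : ℂ} (hz : ‖z‖ < 1) (y : EllTwo) :
    hardyEval z y = y 0 + z * hardyEval z (backwardShift y) := by
  have hy := hasSum_hardyEval hz y
  rw [← hy.tsum_eq, hy.summable.tsum_eq_zero_add, pow_zero, mul_one,
    ← ((hasSum_hardyEval hz (backwardShift y)).mul_left z).tsum_eq]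
  simp only [backwardShift_apply, pow_succ', mul_left_comm]

lemma hasSum_natCast_mul_normSq_backwardShift
    (h : HasSum (fun n : ℕ => (n : ℝ) * ‖y n‖ ^ 2) D) :
    HasSum (fun n : ℕ => (n : ℝ) * ‖backwardShift y n‖ ^ 2) (D - ‖backwardShift y‖ ^ 2) := by
  have hshift := (hasSum_nat_add_iff' 1).2 h
  simp only [Finset.range_one, Finset.sum_singleton, CharP.cast_eq_zero, zero_mul, sub_zero]
    at hshift
  refine (hshift.sub (EllTwo.hasSum_normSq (backwardShift y))).congr_fun fun n => ?_
  rw [backwardShift_apply]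
  push_cast
  ring

lemma sum_normSq_backwardShift_pow_succ_le
    (h : HasSum (fun n : ℕ => (n : ℝ) * ‖y n‖ ^ 2) D) (N : ℕ) :
    ∑ k ∈ Finset.range N, ‖(backwardShift ^ (k + 1)) y‖ ^ 2 ≤ D := by
  induction N generalizing y D with
  | zero => simpa using h.nonneg fun n => by positivity
  | succ N ih =>
    have := ih (hasSum_natCast_mul_normSq_backwardShift h)
    simp only [← mul_apply_eq_comp, ← pow_succ] at this
    rw [Finset.sum_range_succ', zero_add, pow_one]
    linarith

lemma summable_normSq_backwardShift_pow_succ (h : Summable fun n : ℕ => (n : ℝ) * ‖y n‖ ^ 2) :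
    Summable fun k => ‖(backwardShift ^ (k + 1)) y‖ ^ 2 :=
  summable_of_sum_range_le (fun _ => by positivity)
    (sum_normSq_backwardShift_pow_succ_le h.hasSum)

end BackwardShift

section DivisionByBlaschkeFactor

/-- The resolvent `(1 - a S*)⁻¹` of the backward shift; meaningful for `‖a‖ < 1`. -/
def shiftResolvent (a : ℂ) : EllTwo →L[ℂ] EllTwo := Ring.inverse (1 - a • backwardShift)

/-- In the division `f = c / (1 - āz) + b_a g` of a Hardy function by the Blaschke factor `b_a`,
the operator `f ↦ g`. -/
def blaschkeQuotient (a : ℂ) : EllTwo →L[ℂ] EllTwo :=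
  (conj a • 1 - backwardShift) * shiftResolvent a

/-- In the division `f = c / (1 - āz) + b_a g` of a Hardy function by the Blaschke factor `b_a`,
the coefficient `c`. -/
def blaschkeRemainder (a : ℂ) (y : EllTwo) : ℂ := (1 - ‖a‖ ^ 2 : ℝ) * shiftResolvent a y 0

variable {a z : ℂ}

lemma shiftResolvent_sub (ha : ‖a‖ < 1) (y : EllTwo) :
    shiftResolvent a y - a • backwardShift (shiftResolvent a y) = y := by
  have hnorm : ‖a • backwardShift‖ < 1 := by
    rw [norm_smul]
    exact (mul_le_of_le_one_right (norm_nonneg a) norm_backwardShift_le).trans_lt ha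
  have hinv := Ring.mul_inverse_cancel _ (isUnit_one_sub_of_norm_lt_one hnorm)
  simpa [shiftResolvent] using congr($hinv y)

lemma commute_shiftResolvent_backwardShift (a : ℂ) :
    Commute (shiftResolvent a) backwardShift := by
  have hS : Commute (1 - a • backwardShift) backwardShift :=
    (Commute.one_left _).sub_left ((Commute.refl _).smul_left a)
  by_cases h : IsUnit (1 - a • backwardShift)
  · obtain ⟨U, hU⟩ := h
    rw [shiftResolvent, ← hU, Ring.inverse_unit]
    exact Commute.units_inv_left (hU ▸ hS)
  · rw [shiftResolvent, Ring.inverse_non_unit _ h]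
    exact Commute.zero_left _

lemma commute_blaschkeQuotient_backwardShift (a : ℂ) :
    Commute (blaschkeQuotient a) backwardShift :=
  (((Commute.one_left _).smul_left _).sub_left (Commute.refl _)).mul_left
    (commute_shiftResolvent_backwardShift a)

lemma blaschkeQuotient_zero : blaschkeQuotient 0 = -backwardShift := by
  simp [blaschkeQuotient, shiftResolvent]

lemma hardyEval_eq_blaschkeRemainder_add (ha : ‖a‖ < 1) (hz : ‖z‖ < 1) (y : EllTwo) :
    hardyEval z y = blaschkeRemainder a y * (1 - conj a * z)⁻¹ +
      blaschkeFactor a z * hardyEval z (blaschkeQuotient a y) := by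
  set x := shiftResolvent a y with hx
  have hy : hardyEval z y = hardyEval z x - a * hardyEval z (backwardShift x) := by
    conv_lhs => rw [← shiftResolvent_sub ha y, map_sub, map_smul, smul_eq_mul, ← hx]
  have hq : hardyEval z (blaschkeQuotient a y) =
      conj a * hardyEval z x - hardyEval z (backwardShift x) := by
    rw [← smul_eq_mul, ← map_smul, ← map_sub]
    rfl
  have hnorm : ((‖a‖ : ℝ) : ℂ) ^ 2 = a * conj a := (mul_conj' a).symm
  have hden := mul_inv_cancel₀ (one_sub_conj_mul_ne_zero ha hz.le)
  rw [hy, hq, hardyEval_eq_add_mul_backwardShift hz x, blaschkeFactor, blaschkeRemainder, ← hx]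
  push_cast
  rw [hnorm]
  linear_combination ((a - z) * hardyEval z (backwardShift x) - x 0) * hden

lemma normSq_sub_smul_sub_normSq_smul_sub {E : Type*} [NormedAddCommGroup E]
    [InnerProductSpace ℂ E] (x y : E) (a : ℂ) :
    ‖x - a • y‖ ^ 2 - ‖conj a • x - y‖ ^ 2 = (1 - ‖a‖ ^ 2) * (‖x‖ ^ 2 - ‖y‖ ^ 2) := by
  rw [@norm_sub_sq ℂ, @norm_sub_sq ℂ _ _ _ _ (conj a • x), inner_smul_right, inner_smul_left,
    norm_smul, norm_smul, norm_conj, conj_conj]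
  ring

lemma normSq_blaschkeRemainder_le (ha : ‖a‖ < 1) (y : EllTwo) :
    ‖blaschkeRemainder a y‖ ^ 2 ≤ ‖y‖ ^ 2 - ‖blaschkeQuotient a y‖ ^ 2 := by
  have ha0 : 0 ≤ 1 - ‖a‖ ^ 2 := by nlinarith [norm_nonneg a]
  calc ‖blaschkeRemainder a y‖ ^ 2 = (1 - ‖a‖ ^ 2) ^ 2 * ‖shiftResolvent a y 0‖ ^ 2 := by
        rw [blaschkeRemainder, norm_mul, norm_real, Real.norm_of_nonneg ha0, mul_pow]
    _ ≤ (1 - ‖a‖ ^ 2) * ‖shiftResolvent a y 0‖ ^ 2 := by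
        gcongr
        exact pow_le_of_le_one ha0 (by nlinarith [norm_nonneg a]) two_ne_zero
    _ = (1 - ‖a‖ ^ 2) * (‖shiftResolvent a y‖ ^ 2 - ‖backwardShift (shiftResolvent a y)‖ ^ 2) := by
        rw [normSq_eq_add_normSq_backwardShift (shiftResolvent a y), add_sub_cancel_right]
    _ = ‖y‖ ^ 2 - ‖blaschkeQuotient a y‖ ^ 2 := by
        rw [← normSq_sub_smul_sub_normSq_smul_sub, shiftResolvent_sub ha]
        rfl

lemma norm_blaschkeQuotient_le (ha : ‖a‖ < 1) : ‖blaschkeQuotient a‖ ≤ 1 :=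
  ContinuousLinearMap.opNorm_le_bound _ zero_le_one fun y => by
    rw [one_mul]
    exact le_of_sq_le_sq (by
      nlinarith [normSq_blaschkeRemainder_le ha y, sq_nonneg ‖blaschkeRemainder a y‖])
      (norm_nonneg y)

end DivisionByBlaschkeFactor

section TakenakaMalmquist

/-- The product of the quotient operators of the Blaschke factors at `a 0, …, a (n - 1)`. -/
def iteratedQuotient (a : ℕ → ℂ) : ℕ → EllTwo →L[ℂ] EllTwo
  | 0 => 1
  | n + 1 => blaschkeQuotient (a n) * iteratedQuotient a n

/-- The `j`-th function, not normalized, of the Takenaka–Malmquist basis with poles `1 / ā_i`. -/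
def takenakaMalmquist (a : ℕ → ℂ) (j : ℕ) (z : ℂ) : ℂ :=
  (∏ i ∈ Finset.range j, blaschkeFactor (a i) z) * (1 - conj (a j) * z)⁻¹

/-- The coefficient of `takenakaMalmquist a j` in the expansion of a Hardy function. -/
def takenakaMalmquistCoeff (a : ℕ → ℂ) (j : ℕ) (y : EllTwo) : ℂ :=
  blaschkeRemainder (a j) (iteratedQuotient a j y)

variable {a : ℕ → ℂ} {z : ℂ}

lemma norm_takenakaMalmquist_le (ha : ∀ j, ‖a j‖ < 1) (j : ℕ) (hz : ‖z‖ < 1) :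
    ‖takenakaMalmquist a j z‖ ≤ (1 - ‖a j‖)⁻¹ := by
  rw [takenakaMalmquist, norm_mul, norm_inv]
  have hinv := inv_anti₀ (sub_pos.2 (ha j)) (one_sub_norm_le_norm_one_sub_conj_mul (a j) hz.le)
  exact (mul_le_of_le_one_left (by positivity) (norm_prod_blaschkeFactor_le_one ha j hz)).trans hinv

lemma hardyEval_eq_sum_takenakaMalmquist_add (ha : ∀ j, ‖a j‖ < 1) (n : ℕ) (hz : ‖z‖ < 1)
    (y : EllTwo) :
    hardyEval z y = ∑ j ∈ Finset.range n, takenakaMalmquistCoeff a j y * takenakaMalmquist a j z +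
      (∏ j ∈ Finset.range n, blaschkeFactor (a j) z) * hardyEval z (iteratedQuotient a n y) := by
  induction n with
  | zero => simp [iteratedQuotient]
  | succ n ih =>
    rw [ih, Finset.sum_range_succ, Finset.prod_range_succ, takenakaMalmquistCoeff,
      takenakaMalmquist, iteratedQuotient, mul_apply_eq_comp,
      hardyEval_eq_blaschkeRemainder_add (ha n) hz]
    ring

lemma sum_normSq_takenakaMalmquistCoeff_le (ha : ∀ j, ‖a j‖ < 1) (n : ℕ) (y : EllTwo) :
    ∑ j ∈ Finset.range n, ‖takenakaMalmquistCoeff a j y‖ ^ 2 ≤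
      ‖y‖ ^ 2 - ‖iteratedQuotient a n y‖ ^ 2 := by
  induction n with
  | zero => simp [iteratedQuotient]
  | succ n ih =>
    have := normSq_blaschkeRemainder_le (ha n) (iteratedQuotient a n y)
    rw [Finset.sum_range_succ, iteratedQuotient, mul_apply_eq_comp, takenakaMalmquistCoeff]
    linarith

lemma norm_iteratedQuotient_le (ha : ∀ j, ‖a j‖ < 1) (n : ℕ) : ‖iteratedQuotient a n‖ ≤ 1 := by
  induction n with
  | zero => exact ContinuousLinearMap.norm_id_le
  | succ n ih =>
    exact (norm_mul_le _ _).trans (mul_le_one₀ (norm_blaschkeQuotient_le (ha n)) (norm_nonneg _) ih)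

lemma exists_iteratedQuotient_succ_eq_mul_backwardShift (ha : ∀ j, ‖a j‖ < 1) (h0 : a 0 = 0)
    (n : ℕ) : ∃ C : EllTwo →L[ℂ] EllTwo, ‖C‖ ≤ 1 ∧ Commute C backwardShift ∧
      iteratedQuotient a (n + 1) = C * backwardShift := by
  induction n with
  | zero =>
    refine ⟨-1, ?_, (Commute.one_left _).neg_left, ?_⟩
    · rw [norm_neg]
      exact ContinuousLinearMap.norm_id_le
    · rw [iteratedQuotient, iteratedQuotient, h0, blaschkeQuotient_zero, mul_one, neg_one_mul]
  | succ n ih =>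
    obtain ⟨C, hC, hcomm, hCS⟩ := ih
    refine ⟨blaschkeQuotient (a (n + 1)) * C,
      (norm_mul_le _ _).trans (mul_le_one₀ (norm_blaschkeQuotient_le (ha _)) (norm_nonneg _) hC),
      (commute_blaschkeQuotient_backwardShift _).mul_left hcomm, ?_⟩
    rw [iteratedQuotient, hCS, mul_assoc]

end TakenakaMalmquist

section Decomposition

lemma norm_pow_apply_le_of_norm_le_one {E : Type*} [NormedAddCommGroup E] [NormedSpace ℂ E]
    {T : E →L[ℂ] E} (hT : ‖T‖ ≤ 1) (k : ℕ) (y : E) : ‖(T ^ k) y‖ ≤ ‖y‖ := by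
  induction k with
  | zero => simp
  | succ k ih =>
    rw [pow_succ', mul_apply_eq_comp]
    exact (T.le_of_opNorm_le hT _).trans (by rwa [one_mul])

lemma hasSum_pow_mul_apply_sub_mul_apply {E : Type*} [NormedAddCommGroup E] [NormedSpace ℂ E]
    {T : E →L[ℂ] E} (hT : ‖T‖ ≤ 1) {p : ℂ} (hp : ‖p‖ < 1) (l : E →L[ℂ] ℂ) (y : E) :
    HasSum (fun k => p ^ k * (l ((T ^ k) y) - p * l (T ((T ^ k) y)))) (l y) := by
  have hsum : Summable fun k => p ^ k * l ((T ^ k) y) := by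
    refine Summable.of_norm_bounded ((summable_geometric_of_lt_one (norm_nonneg p) hp).mul_right
      (‖l‖ * ‖y‖)) fun k => ?_
    rw [norm_mul, norm_pow]
    gcongr
    exact (l.le_opNorm _).trans (by gcongr; exact norm_pow_apply_le_of_norm_le_one hT k y)
  have := hsum.hasSum.sub ((hasSum_nat_add_iff' 1).2 hsum.hasSum)
  simp only [Finset.range_one, Finset.sum_singleton, sub_sub_cancel, pow_zero, one_mul,
    one_apply_eq_self] at this
  refine this.congr_fun fun k => ?_
  rw [pow_succ' T, mul_apply_eq_comp]
  ring

lemma summable_natCast_mul_of_le_sub {A b : ℕ → ℝ} (hb0 : ∀ k, 0 ≤ b k)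
    (hb : ∀ k, b k ≤ A k - A (k + 1)) (hA0 : ∀ k, 0 ≤ A k) (hA : Summable fun k => A (k + 1)) :
    Summable fun k : ℕ => (k : ℝ) * b k := by
  have habel (N : ℕ) : ∑ k ∈ Finset.range N, (k : ℝ) * (A k - A (k + 1)) =
      ∑ k ∈ Finset.range N, A (k + 1) - N * A N := by
    induction N with
    | zero => simp
    | succ N ih =>
      rw [Finset.sum_range_succ, Finset.sum_range_succ, ih]
      push_cast
      ring
  refine summable_of_sum_range_le (c := ∑' k, A (k + 1))
    (fun k => mul_nonneg (Nat.cast_nonneg k) (hb0 k)) fun N => ?_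
  calc ∑ k ∈ Finset.range N, (k : ℝ) * b k
      ≤ ∑ k ∈ Finset.range N, (k : ℝ) * (A k - A (k + 1)) := by
        gcongr with k
        exact hb k
    _ ≤ ∑ k ∈ Finset.range N, A (k + 1) := by
        rw [habel]
        exact sub_le_self _ (mul_nonneg (Nat.cast_nonneg N) (hA0 N))
    _ ≤ ∑' k, A (k + 1) := hA.sum_le_tsum _ fun k _ => hA0 (k + 1)

variable {a : ℕ → ℂ} {κ : ℂ} {n : ℕ} {g : ℂ → ℂ}

lemma summable_natCast_mul_normSq_takenakaMalmquistCoeff (hκ : ‖κ‖ = 1) (ha : ∀ j, ‖a j‖ < 1)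
    (h0 : a 0 = 0) {y : EllTwo} (hy : Summable fun n : ℕ => (n : ℝ) * ‖y n‖ ^ 2) {j : ℕ}
    (hj : j < n) : Summable fun k : ℕ =>
      (k : ℝ) * ‖takenakaMalmquistCoeff a j (((κ⁻¹ • iteratedQuotient a n) ^ k) y)‖ ^ 2 := by
  obtain ⟨m, rfl⟩ := Nat.exists_eq_succ_of_ne_zero (Nat.ne_zero_of_lt hj)
  obtain ⟨C, hC, hcomm, hCS⟩ := exists_iteratedQuotient_succ_eq_mul_backwardShift ha h0 m
  set T := κ⁻¹ • iteratedQuotient a (m + 1) with hT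
  have hTpow (k : ℕ) : ‖(T ^ k) y‖ ^ 2 ≤ ‖(backwardShift ^ k) y‖ ^ 2 := by
    rw [hT, hCS, smul_pow, hcomm.mul_pow, smul_apply, norm_smul, norm_pow,
      norm_inv, hκ, inv_one, one_pow, one_mul, mul_apply_eq_comp]
    gcongr
    exact norm_pow_apply_le_of_norm_le_one hC k _
  refine summable_natCast_mul_of_le_sub (A := fun k => ‖(T ^ k) y‖ ^ 2) (fun _ => by positivity)
    (fun k => ?_) (fun _ => by positivity)
    ((summable_normSq_backwardShift_pow_succ hy).of_nonneg_of_le (fun _ => by positivity)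
      fun k => hTpow (k + 1))
  have hnorm : ‖(T ^ (k + 1)) y‖ = ‖iteratedQuotient a (m + 1) ((T ^ k) y)‖ := by
    rw [pow_succ', mul_apply_eq_comp, hT, smul_apply, norm_smul, norm_inv, hκ,
      inv_one, one_mul]
  rw [hnorm]
  exact (Finset.single_le_sum (f := fun j => ‖takenakaMalmquistCoeff a j ((T ^ k) y)‖ ^ 2)
    (fun _ _ => by positivity) (Finset.mem_range.2 hj)).trans
    (sum_normSq_takenakaMalmquistCoeff_le ha (m + 1) _)

-- Iterating `f = ∑ cⱼ eⱼ + B · T f` gives `f = ∑ⱼ eⱼ ∑ₖ cⱼ(Tᵏ f) Bᵏ`. A zero of `B` at the origin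
-- makes `T` a contraction times `S*`, so that the inner series lies in the Dirichlet space.
lemma MemDirichlet.eq_sum_mul_comp_blaschkeProduct_of_zero (hg : MemDirichlet g) (hκ : ‖κ‖ = 1)
    (ha : ∀ j, ‖a j‖ < 1) (h0 : a 0 = 0) (hn : n ≠ 0) :
    ∃ e f : ℕ → ℂ → ℂ, (∀ j, ∃ M, ∀ z, ‖z‖ < 1 → ‖e j z‖ ≤ M) ∧
      (∀ j ∈ Finset.range n, MemDirichlet (f j)) ∧
      ∀ z, ‖z‖ < 1 → g z = ∑ j ∈ Finset.range n, e j z * f j (blaschkeProduct κ a n z) := by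
  set y := EllTwo.ofSeq (taylorCoeff g)
  set T := κ⁻¹ • iteratedQuotient a n with hT_def
  have hκ0 : κ ≠ 0 := norm_ne_zero_iff.1 (by rw [hκ]; exact one_ne_zero)
  have hy : Summable fun n : ℕ => (n : ℝ) * ‖y n‖ ^ 2 := by
    simpa only [y, EllTwo.ofSeq_apply hg.memHardy.2] using (memDirichlet_iff_summable hg.1).1 hg
  have hT : ‖T‖ ≤ 1 := by
    rw [norm_smul, norm_inv, hκ, inv_one, one_mul]
    exact norm_iteratedQuotient_le ha n
  have hcoeff {j : ℕ} (hj : j ∈ Finset.range n) :=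
    summable_natCast_mul_normSq_takenakaMalmquistCoeff hκ ha h0 hy (Finset.mem_range.1 hj)
  refine ⟨takenakaMalmquist a,
    fun j w => hardyEval w (EllTwo.ofSeq fun k => takenakaMalmquistCoeff a j ((T ^ k) y)),
    fun j => ⟨_, fun z hz => norm_takenakaMalmquist_le ha j hz⟩,
    fun j hj => memDirichlet_hardyEval ?_, fun z hz => ?_⟩
  · simpa only [hT_def, EllTwo.ofSeq_apply (summable_normSq_of_summable_natCast_mul (hcoeff hj))]
      using hcoeff hj
  have hB := norm_blaschkeProduct_lt_one hκ ha hn hz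
  have hstep (x : EllTwo) : hardyEval z x - blaschkeProduct κ a n z * hardyEval z (T x) =
      ∑ j ∈ Finset.range n, takenakaMalmquistCoeff a j x * takenakaMalmquist a j z := by
    rw [hardyEval_eq_sum_takenakaMalmquist_add ha n hz x, hT_def, smul_apply,
      map_smul, smul_eq_mul, blaschkeProduct]
    field_simp
    ring
  rw [← hardyEval_ofSeq_taylorCoeff hg.memHardy hz]
  refine (hasSum_pow_mul_apply_sub_mul_apply hT hB (hardyEval z) y).unique
    ((hasSum_sum fun j _ => (hasSum_hardyEval hB _).mul_left _).congr_fun fun k => ?_)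
  rw [hstep, Finset.mul_sum]
  refine Finset.sum_congr rfl fun j hj => ?_
  rw [EllTwo.ofSeq_apply (summable_normSq_of_summable_natCast_mul (hcoeff hj))]
  ring

lemma MemDirichlet.comp_blaschkeFactor (hg : MemDirichlet g) {b : ℂ} (hb : ‖b‖ < 1) :
    MemDirichlet fun z => g (blaschkeFactor b z) := by
  refine hg.comp (N := 1) (differentiableOn_blaschkeFactor hb)
    (fun z hz => mem_unitDisc.2 (norm_blaschkeFactor_lt_one hb (mem_unitDisc.1 hz))) fun w => ?_
  refine Set.encard_le_one_iff.2 fun z₁ z₂ h₁ h₂ => ?_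
  rw [← blaschkeFactor_blaschkeFactor hb (mem_unitDisc.1 h₁.1), h₁.2, ← h₂.2,
    blaschkeFactor_blaschkeFactor hb (mem_unitDisc.1 h₂.1)]

-- Precomposing with the involution at `a 0` moves that zero to the origin.
lemma MemDirichlet.eq_sum_mul_comp_blaschkeProduct (hg : MemDirichlet g) (hκ : ‖κ‖ = 1)
    (ha : ∀ j, ‖a j‖ < 1) (hn : n ≠ 0) :
    ∃ e f : ℕ → ℂ → ℂ, (∀ j, ∃ M, ∀ z, ‖z‖ < 1 → ‖e j z‖ ≤ M) ∧
      (∀ j ∈ Finset.range n, MemDirichlet (f j)) ∧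
      ∀ z, ‖z‖ < 1 → g z = ∑ j ∈ Finset.range n, e j z * f j (blaschkeProduct κ a n z) := by
  choose l hl hcomp using fun j => exists_norm_eq_one_blaschkeFactor_comp (ha 0) (ha j)
  obtain ⟨e, f, he, hf, hgef⟩ := (hg.comp_blaschkeFactor
    (ha 0)).eq_sum_mul_comp_blaschkeProduct_of_zero (κ := κ * ∏ j ∈ Finset.range n, l j)
    (a := fun j => blaschkeFactor (a 0) (a j)) (by simp [norm_prod, hκ, hl])
    (fun j => norm_blaschkeFactor_lt_one (ha 0) (ha j)) (blaschkeFactor_self _) hn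
  refine ⟨fun j z => e j (blaschkeFactor (a 0) z), f, fun j => ?_, hf, fun z hz => ?_⟩
  · obtain ⟨M, hM⟩ := he j
    exact ⟨M, fun z hz => hM _ (norm_blaschkeFactor_lt_one (ha 0) hz)⟩
  · have hz' := norm_blaschkeFactor_lt_one (ha 0) hz
    have hprod : blaschkeProduct (κ * ∏ j ∈ Finset.range n, l j)
        (fun j => blaschkeFactor (a 0) (a j)) n (blaschkeFactor (a 0) z) =
        blaschkeProduct κ a n z := by
      simp only [blaschkeProduct, mul_assoc, ← Finset.prod_mul_distrib, ← hcomp _ _ hz',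
        blaschkeFactor_blaschkeFactor (ha 0) hz]
    rw [← hprod, ← hgef _ hz', blaschkeFactor_blaschkeFactor (ha 0) hz]

end Decomposition

section MultipliersOfBlaschkeProducts

variable {u φ ψ : ℂ → ℂ}

lemma memLp_mul_of_norm_le {F : ℂ → ℂ} (hu : ContinuousOn u unitDisc)
    (hbdd : ∃ K, ∀ z, ‖z‖ < 1 → ‖u z‖ ≤ K) (hF : MemLp F 2 (volume.restrict unitDisc)) :
    MemLp (fun z => u z * F z) 2 (volume.restrict unitDisc) := by
  obtain ⟨K, hK⟩ := hbdd
  refine hF.of_le_mul (c := K)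
    ((hu.aestronglyMeasurable isOpen_unitDisc.measurableSet).mul hF.1) ?_
  filter_upwards [self_mem_ae_restrict isOpen_unitDisc.measurableSet] with z hz
  rw [norm_mul]
  exact mul_le_mul_of_nonneg_right (hK z (mem_unitDisc.1 hz)) (norm_nonneg _)

lemma memDirichlet_mul_iff {f : ℂ → ℂ} (hu : DifferentiableOn ℂ u unitDisc)
    (hbdd : ∃ K, ∀ z, ‖z‖ < 1 → ‖u z‖ ≤ K) (hf : MemDirichlet f) :
    MemDirichlet (fun z => u z * f z) ↔
      MemLp (fun z => deriv u z * f z) 2 (volume.restrict unitDisc) := by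
  have hderiv : deriv (fun z => u z * f z) =ᵐ[volume.restrict unitDisc]
      (fun z => deriv u z * f z) + fun z => u z * deriv f z := by
    filter_upwards [self_mem_ae_restrict isOpen_unitDisc.measurableSet] with z hz
    exact ((hasDerivAt_of_mem_unitDisc hu hz).mul (hasDerivAt_of_mem_unitDisc hf.1 hz)).deriv
  have huf' := memLp_mul_of_norm_le hu.continuousOn hbdd ((memDirichlet_iff_memLp hf.1).1 hf)
  rw [memDirichlet_iff_memLp (hu.fun_mul hf.1), memLp_congr_ae hderiv]
  exact ⟨fun h => by simpa using h.sub huf', fun h => h.add huf'⟩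

lemma WCOBounded.congr (h : WCOBounded u φ) (hφψ : EqOn φ ψ unitDisc) : WCOBounded u ψ := by
  obtain ⟨C, hC0, hC⟩ := h
  refine ⟨C, hC0, fun f hf => ?_⟩
  have heq : EqOn (fun z => u z * f (φ z)) (fun z => u z * f (ψ z)) unitDisc := fun z hz => by
    simp only [hφψ hz]
  exact ⟨(hC f hf).1.congr heq, dirNormSq_congr heq ▸ (hC f hf).2⟩

lemma multSpace_congr (h : EqOn φ ψ unitDisc) : multSpace φ = multSpace ψ :=
  Set.ext fun _ => and_congr_right fun _ => ⟨fun hu => hu.congr h, fun hu => hu.congr h.symm⟩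

variable {κ : ℂ} {a : ℕ → ℂ} {n : ℕ}

lemma mapsTo_blaschkeProduct (hκ : ‖κ‖ = 1) (ha : ∀ j, ‖a j‖ < 1) (hn : n ≠ 0) :
    MapsTo (blaschkeProduct κ a n) unitDisc unitDisc := fun _ hz =>
  mem_unitDisc.2 (norm_blaschkeProduct_lt_one hκ ha hn (mem_unitDisc.1 hz))

lemma mem_dirichletMultipliers_of_wcoBounded_blaschkeProduct (hκ : ‖κ‖ = 1)
    (ha : ∀ j, ‖a j‖ < 1) (hn : n ≠ 0) (hu : DifferentiableOn ℂ u unitDisc)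
    (hW : WCOBounded u (blaschkeProduct κ a n)) : u ∈ dirichletMultipliers := by
  refine ⟨hu, fun g hg => ?_⟩
  have hmaps := mapsTo_blaschkeProduct hκ ha hn
  obtain ⟨M, hM1, hM⟩ := exists_one_sub_normSq_blaschkeProduct_le hκ ha n
  have hbdd := hW.exists_norm_le hmaps hM1 hM
  obtain ⟨e, f, he, hf, hgef⟩ := hg.eq_sum_mul_comp_blaschkeProduct hκ ha hn
  choose E hE using he
  obtain ⟨_, _, hW⟩ := hW
  have hterm : ∀ j ∈ Finset.range n, MemLp (fun z => deriv u z * f j (blaschkeProduct κ a n z)) 2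
      (volume.restrict unitDisc) := fun j hj =>
    (memDirichlet_mul_iff hu hbdd ((hf j hj).comp (differentiableOn_blaschkeProduct κ ha n) hmaps
      (encard_fiber_blaschkeProduct_le hκ ha hn))).1 (hW _ (hf j hj)).1
  refine (memDirichlet_mul_iff hu hbdd hg).2
    ((memLp_finsetSum _ fun j hj => ((hterm j hj).norm.const_mul (E j))).mono' ?_ ?_)
  · exact (aestronglyMeasurable_deriv u _).mul
      (hg.1.continuousOn.aestronglyMeasurable isOpen_unitDisc.measurableSet)
  · filter_upwards [self_mem_ae_restrict isOpen_unitDisc.measurableSet] with z hz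
    rw [hgef z (mem_unitDisc.1 hz), Finset.mul_sum]
    refine norm_sum_le_of_le _ fun j _ => ?_
    rw [mul_left_comm, norm_mul]
    exact mul_le_mul_of_nonneg_right (hE j z (mem_unitDisc.1 hz)) (norm_nonneg _)

theorem multSpace_blaschkeProduct (hκ : ‖κ‖ = 1) (ha : ∀ j, ‖a j‖ < 1) (hn : n ≠ 0) :
    multSpace (blaschkeProduct κ a n) = dirichletMultipliers := by
  refine Subset.antisymm (fun u hu =>
    mem_dirichletMultipliers_of_wcoBounded_blaschkeProduct hκ ha hn hu.1.1 hu.2) fun u hu => ?_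
  refine ⟨by simpa using hu.2 _ (memDirichlet_const 1), ?_⟩
  exact (wcoBounded_id_of_mem_dirichletMultipliers hu).of_id
    (wcoBounded_one_of_encard_fiber_le (differentiableOn_blaschkeProduct κ ha n)
      (mapsTo_blaschkeProduct hκ ha hn) (encard_fiber_blaschkeProduct_le hκ ha hn))

theorem IsFiniteBlaschke.multSpace_eq (hφ : IsFiniteBlaschke φ)
    (hmaps : MapsTo φ unitDisc unitDisc) : multSpace φ = dirichletMultipliers := by
  obtain ⟨κ, a, n, hκ, ha, heq⟩ := hφ.exists_eqOn_blaschkeProduct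
  rw [multSpace_congr heq]
  refine multSpace_blaschkeProduct hκ ha fun hn => ?_
  have h0 : (0 : ℂ) ∈ unitDisc := mem_unitDisc.2 (by simp)
  have := mem_unitDisc.1 (hmaps h0)
  rw [heq h0, hn, blaschkeProduct, Finset.range_zero, Finset.prod_empty, mul_one, hκ] at this
  exact lt_irrefl 1 this

end MultipliersOfBlaschkeProducts

section Autocorrelation

variable {φ : ℂ → ℂ}

lemma tendsto_tsum_mul_pow_nhdsLT_one {c : ℕ → ℂ} (hc : Summable fun n => ‖c n‖) (m : ℕ → ℕ) :
    Tendsto (fun r : ℝ => ∑' n, c n * (r : ℂ) ^ m n) (𝓝[<] 1) (𝓝 (∑' n, c n)) := by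
  refine tendsto_tsum_of_dominated_convergence hc (fun n => ?_) ?_
  · have hr : Tendsto (fun r : ℝ => (r : ℂ)) (𝓝[<] 1) (𝓝 ((1 : ℝ) : ℂ)) :=
      (continuous_ofReal.tendsto 1).mono_left nhdsWithin_le_nhds
    simpa using (hr.pow (m n)).const_mul (c n)
  · filter_upwards [Ico_mem_nhdsLT zero_lt_one] with r hr n
    rw [norm_mul, norm_pow, norm_real, Real.norm_of_nonneg hr.1]
    exact mul_le_of_le_one_right (norm_nonneg _) (pow_le_one₀ hr.1 hr.2.le)

lemma IsInner.tendsto_integral_circle (hφ : IsInner φ) (k : ℕ) :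
    Tendsto (fun r : ℝ => ∫ θ in (0 : ℝ)..(0 + 2 * Real.pi),
        ((‖φ (r * exp (θ * I))‖ ^ 2 : ℝ) : ℂ) * exp (-k * (θ * I)))
      (𝓝[<] 1) (𝓝 (∫ θ in (0 : ℝ)..(0 + 2 * Real.pi), exp (-k * (θ * I)))) := by
  obtain ⟨hd, hmaps, hradial⟩ := hφ
  have hunit : Ico (0 : ℝ) 1 ∈ 𝓝[<] (1 : ℝ) := Ico_mem_nhdsLT zero_lt_one
  have hexp (θ : ℝ) : ‖exp (-k * (θ * I))‖ = 1 := by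
    rw [neg_mul, exp_neg, norm_inv, norm_exp_natCast_mul_I, inv_one]
  refine intervalIntegral.tendsto_integral_filter_of_dominated_convergence (fun _ => 1) ?_ ?_
    intervalIntegrable_const ?_
  · filter_upwards [hunit] with r hr
    have hcont := continuous_circle hd.continuousOn hr.1 hr.2
    exact ((continuous_ofReal.comp (hcont.norm.pow 2)).mul (by fun_prop)).aestronglyMeasurable
  · filter_upwards [hunit] with r hr
    refine ae_of_all _ fun θ _ => ?_
    have hlt := mem_unitDisc.1 (hmaps (mem_unitDisc.2
      ((norm_real_mul_exp hr.1 θ).trans_lt hr.2)))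
    rw [norm_mul, hexp, mul_one, norm_real, Real.norm_of_nonneg (by positivity)]
    exact pow_le_one₀ (norm_nonneg _) hlt.le
  · filter_upwards [(ae_restrict_iff' measurableSet_Ioc).1 hradial] with θ hθ hmem
    rw [zero_add, uIoc_of_le Real.two_pi_pos.le] at hmem
    simpa using ((hθ hmem).pow 2).ofReal.mul_const (exp (-k * (θ * I)))

lemma IsInner.inner_backwardShift_pow (hφ : IsInner φ) (hH : MemHardy φ) (k : ℕ) :
    ⟪EllTwo.ofSeq (taylorCoeff φ), (backwardShift ^ k) (EllTwo.ofSeq (taylorCoeff φ))⟫_ℂ =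
      if k = 0 then 1 else 0 := by
  set y := EllTwo.ofSeq (taylorCoeff φ)
  have hterm (n : ℕ) : ⟪y n, (backwardShift ^ k) y n⟫_ℂ =
      taylorCoeff φ (n + k) * conj (taylorCoeff φ n) := by
    rw [RCLike.inner_apply, backwardShift_pow_apply, EllTwo.ofSeq_apply hH.2,
      EllTwo.ofSeq_apply hH.2]
  have hsum := (lp.summable_inner (𝕜 := ℂ) y ((backwardShift ^ k) y)).norm
  simp only [hterm] at hsum
  have habel := (tendsto_tsum_mul_pow_nhdsLT_one hsum fun n => 2 * n + k).const_mul
    (2 * Real.pi : ℂ)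
  have heq := tendsto_nhds_unique (habel.congr' ?_) (hφ.tendsto_integral_circle k)
  · have hint := integral_exp_int_mul_I 0 (-k)
    push_cast at hint
    simp only [hint, neg_eq_zero, Nat.cast_eq_zero] at heq
    have hpi : 2 * (Real.pi : ℂ) ≠ 0 := by simp [Real.pi_ne_zero]
    rw [lp.inner_eq_tsum, tsum_congr hterm]
    refine mul_left_cancel₀ hpi (heq.trans ?_)
    rw [mul_ite, mul_one, mul_zero]
  · filter_upwards [Ico_mem_nhdsLT zero_lt_one] with r hr
    rw [← (hasSum_integral_circle_normSq_mul_exp_neg hφ.1 hr.1 hr.2 0 k).tsum_eq, ← tsum_mul_left]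
    exact tsum_congr fun n => (mul_assoc _ _ _).symm

end Autocorrelation

section DefectIdentity

variable {z : ℂ}

lemma hasSum_pow_mul_apply_backwardShift_pow (hz : ‖z‖ < 1) (l : EllTwo →L[ℂ] ℂ) (y : EllTwo) :
    HasSum (fun k => z ^ k * l ((backwardShift ^ k) y)) (l (shiftResolvent z y)) := by
  refine (hasSum_pow_mul_apply_sub_mul_apply norm_backwardShift_le hz l _).congr_fun fun k => ?_
  have hcomm (x : EllTwo) :
      (backwardShift ^ k) (backwardShift x) = backwardShift ((backwardShift ^ k) x) := by
    rw [← mul_apply_eq_comp, ← mul_apply_eq_comp, ← pow_succ, ← pow_succ']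
  conv_lhs => rw [← shiftResolvent_sub hz y]
  rw [map_sub, map_smul, map_sub, map_smul, smul_eq_mul, hcomm]

lemma shiftResolvent_apply_zero (hz : ‖z‖ < 1) (y : EllTwo) :
    shiftResolvent z y 0 = hardyEval z y := by
  conv_rhs => rw [← shiftResolvent_sub hz y]
  rw [map_sub, map_smul, smul_eq_mul, hardyEval_eq_add_mul_backwardShift hz (shiftResolvent z y),
    add_sub_cancel_right]

lemma shiftResolvent_apply (hz : ‖z‖ < 1) (y : EllTwo) (m : ℕ) :
    shiftResolvent z y m = hardyEval z ((backwardShift ^ m) y) := by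
  have hcomm := ((commute_shiftResolvent_backwardShift z).pow_right m).eq
  rw [← shiftResolvent_apply_zero hz, ← mul_apply_eq_comp, hcomm, mul_apply_eq_comp,
    backwardShift_pow_apply, zero_add]

variable {y : EllTwo}

lemma normSq_shiftResolvent_eq (hz : ‖z‖ < 1)
    (hy : ∀ k, ⟪y, (backwardShift ^ k) y⟫_ℂ = if k = 0 then 1 else 0) :
    ‖z‖ ^ 2 * ‖backwardShift (shiftResolvent z y)‖ ^ 2 = ‖shiftResolvent z y‖ ^ 2 - 1 := by
  have hinner : ⟪y, shiftResolvent z y⟫_ℂ = 1 := by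
    refine (hasSum_pow_mul_apply_backwardShift_pow hz (innerSL ℂ y) y).unique ?_
    refine (hasSum_ite_eq (0 : ℕ) (1 : ℂ)).congr_fun fun k => ?_
    rw [innerSL_apply_apply, hy]
    split_ifs with hk <;> simp [hk]
  have hnorm : ‖y‖ ^ 2 = 1 := by
    have h0 := hy 0
    rw [pow_zero, one_apply_eq_self, if_pos rfl, inner_self_eq_norm_sq_to_K (𝕜 := ℂ)] at h0
    rw [← ofReal_inj, ofReal_pow, ofReal_one]
    exact h0
  have hdiff : z • backwardShift (shiftResolvent z y) = shiftResolvent z y - y := by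
    nth_rw 3 [← shiftResolvent_sub hz y]
    rw [sub_sub_cancel]
  rw [← mul_pow, ← norm_smul, hdiff, norm_sub_rev, norm_sub_sq (𝕜 := ℂ), hinner, hnorm,
    RCLike.one_re]
  ring

theorem hasSum_one_sub_normSq_mul_normSq_hardyEval (hz : ‖z‖ < 1)
    (hy : ∀ k, ⟪y, (backwardShift ^ k) y⟫_ℂ = if k = 0 then 1 else 0) :
    HasSum (fun m => (1 - ‖z‖ ^ 2) * ‖hardyEval z ((backwardShift ^ (m + 1)) y)‖ ^ 2)
      (1 - ‖hardyEval z y‖ ^ 2) := by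
  have hvalue : 1 - ‖hardyEval z y‖ ^ 2 =
      (1 - ‖z‖ ^ 2) * ‖backwardShift (shiftResolvent z y)‖ ^ 2 := by
    have hsplit := normSq_eq_add_normSq_backwardShift (shiftResolvent z y)
    rw [shiftResolvent_apply_zero hz] at hsplit
    linarith [normSq_shiftResolvent_eq hz hy]
  rw [hvalue]
  refine ((EllTwo.hasSum_normSq _).mul_left _).congr_fun fun m => ?_
  rw [backwardShift_apply, shiftResolvent_apply hz]

end DefectIdentity

section ApproachToTheCircle

/-- The filter of approach to the unit circle from inside the disc, uniformly in the argument. -/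
def towardsCircle : Filter ℂ := comap norm (𝓝[<] 1)

lemma tendsto_norm_towardsCircle : Tendsto norm towardsCircle (𝓝[<] 1) := tendsto_comap

lemma eventually_norm_lt_one : ∀ᶠ z in towardsCircle, ‖z‖ < 1 :=
  tendsto_norm_towardsCircle.eventually self_mem_nhdsWithin

lemma tendsto_one_sub_normSq : Tendsto (fun z : ℂ => 1 - ‖z‖ ^ 2) towardsCircle (𝓝 0) := by
  simpa using ((tendsto_norm_towardsCircle.mono_right nhdsWithin_le_nhds).pow 2).const_sub 1

lemma exists_of_eventually_towardsCircle {p : ℂ → Prop} (h : ∀ᶠ z in towardsCircle, p z) :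
    ∃ ρ : ℝ, 0 ≤ ρ ∧ ρ < 1 ∧ ∀ z : ℂ, ρ < ‖z‖ → ‖z‖ < 1 → p z := by
  obtain ⟨t, ht, hsub⟩ := mem_comap.1 h
  obtain ⟨l, hl, hIoo⟩ := mem_nhdsLT_iff_exists_Ioo_subset.1 ht
  exact ⟨max l 0, le_max_right _ _, max_lt hl zero_lt_one, fun z hlz hz =>
    hsub (hIoo ⟨(le_max_left _ _).trans_lt hlz, hz⟩)⟩

lemma tendsto_norm_of_tendsto_one_sub_normSq {ι : Type*} {l : Filter ι} {f : ι → ℂ}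
    (h : Tendsto (fun i => 1 - ‖f i‖ ^ 2) l (𝓝 0)) : Tendsto (fun i => ‖f i‖) l (𝓝 1) := by
  simpa using (h.const_sub 1).sqrt

end ApproachToTheCircle

section InnerDirichletFunctions

variable {f φ : ℂ → ℂ} {z : ℂ}

lemma one_sub_normSq_mul_normSq_hardyEval_le (hz : ‖z‖ < 1) (y : EllTwo) :
    (1 - ‖z‖ ^ 2) * ‖hardyEval z y‖ ^ 2 ≤ ‖y‖ ^ 2 := by
  have hpos : 0 < 1 - ‖z‖ ^ 2 := by nlinarith [norm_nonneg z]
  rw [← le_inv_mul_iff₀ hpos, ← normSq_hardyKernel hz]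
  exact normSq_weightedEval_le _ z y

lemma MemDirichlet.tendsto_one_sub_normSq_mul_normSq (hf : MemDirichlet f) :
    Tendsto (fun z => (1 - ‖z‖ ^ 2) * ‖f z‖ ^ 2) towardsCircle (𝓝 0) := by
  have hlog : Continuous fun t : ℝ => (t - t * Real.log t) * dirNormSq f :=
    (continuous_id.sub Real.continuous_mul_log).mul_const _
  have hbound := (hlog.tendsto 0).comp tendsto_one_sub_normSq
  rw [zero_mul, sub_zero, zero_mul] at hbound
  refine tendsto_of_tendsto_of_tendsto_of_le_of_le' tendsto_const_nhds hbound ?_ ?_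
  · filter_upwards [eventually_norm_lt_one] with z hz
    have : 0 < 1 - ‖z‖ ^ 2 := by nlinarith [norm_nonneg z]
    positivity
  · filter_upwards [eventually_norm_lt_one] with z hz
    refine (mul_le_mul_of_nonneg_left (hf.normSq_le hz)
      (by nlinarith [norm_nonneg z])).trans_eq ?_
    simp only [Function.comp_apply]
    ring

lemma summable_natCast_mul_normSq_backwardShift_pow {y : EllTwo}
    (hy : Summable fun n : ℕ => (n : ℝ) * ‖y n‖ ^ 2) (m : ℕ) :
    Summable fun n : ℕ => (n : ℝ) * ‖(backwardShift ^ m) y n‖ ^ 2 := by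
  induction m with
  | zero => exact hy
  | succ m ih =>
    rw [pow_succ', mul_apply_eq_comp]
    exact (hasSum_natCast_mul_normSq_backwardShift ih.hasSum).summable

theorem IsInner.tendsto_norm (hφ : IsInner φ) (hD : MemDirichlet φ) :
    Tendsto (fun z => ‖φ z‖) towardsCircle (𝓝 1) := by
  set y := EllTwo.ofSeq (taylorCoeff φ)
  have hy : Summable fun n : ℕ => (n : ℝ) * ‖y n‖ ^ 2 := by
    simpa only [y, EllTwo.ofSeq_apply hD.memHardy.2] using (memDirichlet_iff_summable hD.1).1 hD
  have hterm (m : ℕ) := (memDirichlet_hardyEval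
    (summable_natCast_mul_normSq_backwardShift_pow hy (m + 1))).tendsto_one_sub_normSq_mul_normSq
  have hsum : Tendsto (fun z => ∑' m : ℕ, (1 - ‖z‖ ^ 2) *
      ‖hardyEval z ((backwardShift ^ (m + 1)) y)‖ ^ 2) towardsCircle (𝓝 (∑' _ : ℕ, 0)) := by
    refine tendsto_tsum_of_dominated_convergence (summable_normSq_backwardShift_pow_succ hy)
      hterm ?_
    filter_upwards [eventually_norm_lt_one] with z hz m
    have : 0 < 1 - ‖z‖ ^ 2 := by nlinarith [norm_nonneg z]
    rw [Real.norm_of_nonneg (by positivity)]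
    exact one_sub_normSq_mul_normSq_hardyEval_le hz _
  rw [tsum_zero] at hsum
  refine tendsto_norm_of_tendsto_one_sub_normSq (hsum.congr' ?_)
  filter_upwards [eventually_norm_lt_one] with z hz
  rw [(hasSum_one_sub_normSq_mul_normSq_hardyEval hz
    (hφ.inner_backwardShift_pow hD.memHardy)).tsum_eq, hardyEval_ofSeq_taylorCoeff hD.memHardy hz]

end InnerDirichletFunctions

section UnimodularBoundaryValues

variable {b z : ℂ} {g h : ℂ → ℂ} {ρ q : ℝ}

lemma norm_le_one_of_tendsto_towardsCircle (hd : DifferentiableOn ℂ h unitDisc)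
    (hb : Tendsto (fun z => ‖h z‖) towardsCircle (𝓝 1)) (hz : ‖z‖ < 1) : ‖h z‖ ≤ 1 := by
  refine le_of_forall_pos_le_add fun ε hε => ?_
  obtain ⟨ρ, hρ0, hρ1, hρ⟩ := exists_of_eventually_towardsCircle
    (hb.eventually (gt_mem_nhds (lt_add_of_pos_right 1 hε)))
  obtain ⟨r, hr, hr1⟩ := exists_between (max_lt hρ1 hz)
  obtain ⟨hρr, hzr⟩ := max_lt_iff.1 hr
  have hr0 : r ≠ 0 := (hρ0.trans_lt hρr).ne'
  have hsub : closure (ball (0 : ℂ) r) ⊆ unitDisc := by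
    rw [closure_ball _ hr0]
    exact closedBall_subset_ball hr1
  refine Complex.norm_le_of_forall_mem_frontier_norm_le isBounded_ball
    (hd.mono hsub).diffContOnCl (fun w hw => ?_) (subset_closure (mem_ball_zero_iff.2 hzr))
  rw [frontier_ball _ hr0, mem_sphere_zero_iff_norm] at hw
  exact (hρ w (hw ▸ hρr) (hw ▸ hr1)).le

lemma isFiniteBlaschke_of_norm_eq_one (hd : DifferentiableOn ℂ h unitDisc)
    (hnorm : ∀ z, ‖z‖ < 1 → ‖h z‖ = 1) : IsFiniteBlaschke h := by
  have h0 : (0 : ℂ) ∈ unitDisc := mem_unitDisc.2 (by simp)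
  have hconst : EqOn h (Function.const ℂ (h 0)) unitDisc :=
    eqOn_of_isPreconnected_of_isMaxOn_norm isPreconnected_unitDisc isOpen_unitDisc hd h0
      fun z hz => ((hnorm z (mem_unitDisc.1 hz)).trans (hnorm 0 (by simp)).symm).le
  refine ⟨arg (h 0), 0, Fin.elim0, fun j => j.elim0, fun z hz => ?_⟩
  have hpolar := norm_mul_exp_arg_mul_I (h 0)
  rw [hnorm 0 (by simp), ofReal_one, one_mul] at hpolar
  rw [hconst hz, hpolar, Fin.prod_univ_zero, mul_one, Function.const_apply]

lemma isFiniteBlaschke_of_ne_zero (hd : DifferentiableOn ℂ h unitDisc)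
    (hb : Tendsto (fun z => ‖h z‖) towardsCircle (𝓝 1)) (hne : ∀ z, ‖z‖ < 1 → h z ≠ 0) :
    IsFiniteBlaschke h := by
  refine isFiniteBlaschke_of_norm_eq_one hd fun z hz =>
    le_antisymm (norm_le_one_of_tendsto_towardsCircle hd hb hz) ?_
  have hinv := norm_le_one_of_tendsto_towardsCircle
    (hd.fun_inv fun z hz => hne z (mem_unitDisc.1 hz)) (by simpa using hb.inv₀ one_ne_zero) hz
  rw [norm_inv] at hinv
  exact (inv_le_one₀ (norm_pos_iff.2 (hne z hz))).1 hinv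

lemma tendsto_norm_blaschkeFactor (hb : ‖b‖ < 1) :
    Tendsto (fun z => ‖blaschkeFactor b z‖) towardsCircle (𝓝 1) := by
  refine tendsto_norm_of_tendsto_one_sub_normSq
    (tendsto_of_tendsto_of_tendsto_of_le_of_le' tendsto_const_nhds
      (by simpa using tendsto_one_sub_normSq.const_mul (1 / (1 - ‖b‖) ^ 2)) ?_ ?_)
  · filter_upwards [eventually_norm_lt_one] with z hz
    nlinarith [norm_blaschkeFactor_lt_one hb hz, norm_nonneg (blaschkeFactor b z)]
  · filter_upwards [eventually_norm_lt_one] with z hz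
    exact one_sub_normSq_blaschkeFactor_le hb hz

lemma exists_eq_blaschkeFactor_mul (hd : DifferentiableOn ℂ h unitDisc) (hb : ‖b‖ < 1)
    (hzero : h b = 0) :
    ∃ g : ℂ → ℂ, DifferentiableOn ℂ g unitDisc ∧
      ∀ z, ‖z‖ < 1 → h z = blaschkeFactor b z * g z := by
  refine ⟨fun z => -(1 - conj b * z) * dslope h b z, ?_, fun z hz => ?_⟩
  · exact DifferentiableOn.fun_mul (by fun_prop)
      ((differentiableOn_dslope (isOpen_unitDisc.mem_nhds (mem_unitDisc.2 hb))).2 hd)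
  · have hslope := sub_smul_dslope h b z
    rw [hzero, sub_zero, smul_eq_mul] at hslope
    have hfactor : blaschkeFactor b z * (1 - conj b * z) = b - z :=
      div_mul_cancel₀ _ (one_sub_conj_mul_ne_zero hb hz.le)
    linear_combination dslope h b z * hfactor - hslope

lemma tendsto_norm_of_eq_blaschkeFactor_mul (hb : ‖b‖ < 1)
    (hbdry : Tendsto (fun z => ‖h z‖) towardsCircle (𝓝 1))
    (heq : ∀ z, ‖z‖ < 1 → h z = blaschkeFactor b z * g z) :
    Tendsto (fun z => ‖g z‖) towardsCircle (𝓝 1) := by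
  have hquot := hbdry.div (tendsto_norm_blaschkeFactor hb) one_ne_zero
  rw [div_one] at hquot
  refine hquot.congr' ?_
  filter_upwards [eventually_norm_lt_one,
    (tendsto_norm_blaschkeFactor hb).eventually (lt_mem_nhds zero_lt_one)] with z hz hpos
  rw [Pi.div_apply, heq z hz, norm_mul, mul_div_cancel_left₀ _ hpos.ne']

lemma IsFiniteBlaschke.of_eq_blaschkeFactor_mul (hg : IsFiniteBlaschke g) (hb : ‖b‖ < 1)
    (heq : ∀ z, ‖z‖ < 1 → h z = blaschkeFactor b z * g z) : IsFiniteBlaschke h := by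
  obtain ⟨θ, n, a, ha, hg⟩ := hg
  refine ⟨θ, n + 1, Fin.cons b a, Fin.cases hb ha, fun z hz => ?_⟩
  rw [heq z (mem_unitDisc.1 hz), hg z hz, Fin.prod_univ_succ]
  simp only [Fin.cons_zero, Fin.cons_succ, blaschkeFactor]
  ring

lemma exists_norm_blaschkeFactor_le (hρ0 : 0 ≤ ρ) (hρ1 : ρ < 1) (hz : ‖z‖ < 1) :
    ∃ q, 0 ≤ q ∧ q < 1 ∧ ∀ b, ‖b‖ ≤ ρ → ‖blaschkeFactor b z‖ ≤ q := by
  have hcont : ContinuousOn (fun b => ‖blaschkeFactor b z‖) (closedBall 0 ρ) := by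
    refine (ContinuousOn.div (by fun_prop) (by fun_prop) fun b hb => ?_).norm
    exact one_sub_conj_mul_ne_zero ((mem_closedBall_zero_iff.1 hb).trans_lt hρ1) hz.le
  obtain ⟨b, hb, hmax⟩ := (isCompact_closedBall (0 : ℂ) ρ).exists_isMaxOn
    (nonempty_closedBall.2 hρ0) hcont
  exact ⟨_, norm_nonneg _,
    norm_blaschkeFactor_lt_one ((mem_closedBall_zero_iff.1 hb).trans_lt hρ1) hz,
    fun c hc => hmax (mem_closedBall_zero_iff.2 hc)⟩

-- Dividing out a zero of modulus at most `ρ` raises `‖h z‖` by a factor of at least `1 / q`, while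
-- the maximum principle keeps it at most `1`: there are at most `n` zeros.
lemma isFiniteBlaschke_of_pow_lt_norm (hz : ‖z‖ < 1)
    (hq0 : 0 ≤ q) (hq : ∀ b, ‖b‖ ≤ ρ → ‖blaschkeFactor b z‖ ≤ q) {n : ℕ}
    (hd : DifferentiableOn ℂ h unitDisc) (hbdry : Tendsto (fun z => ‖h z‖) towardsCircle (𝓝 1))
    (hzeros : ∀ b, ‖b‖ < 1 → h b = 0 → ‖b‖ ≤ ρ) (hn : q ^ n < ‖h z‖) : IsFiniteBlaschke h := by
  induction n generalizing h with
  | zero =>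
    rw [pow_zero] at hn
    exact absurd (norm_le_one_of_tendsto_towardsCircle hd hbdry hz) hn.not_ge
  | succ n ih =>
    by_cases hne : ∀ w, ‖w‖ < 1 → h w ≠ 0
    · exact isFiniteBlaschke_of_ne_zero hd hbdry hne
    push Not at hne
    obtain ⟨b, hb, hb0⟩ := hne
    obtain ⟨g, hg, heq⟩ := exists_eq_blaschkeFactor_mul hd hb hb0
    refine (ih hg (tendsto_norm_of_eq_blaschkeFactor_mul hb hbdry heq) (fun w hw hw0 => ?_)
      (lt_of_mul_lt_mul_left ?_ hq0)).of_eq_blaschkeFactor_mul hb heq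
    · exact hzeros w hw (by rw [heq w hw, hw0, mul_zero])
    · rw [← pow_succ']
      refine hn.trans_le ?_
      rw [heq z hz, norm_mul]
      exact mul_le_mul_of_nonneg_right (hq b (hzeros b hb hb0)) (norm_nonneg _)

theorem isFiniteBlaschke_of_tendsto_norm (hd : DifferentiableOn ℂ h unitDisc)
    (hbdry : Tendsto (fun z => ‖h z‖) towardsCircle (𝓝 1)) : IsFiniteBlaschke h := by
  obtain ⟨ρ, hρ0, hρ1, hρ⟩ := exists_of_eventually_towardsCircle
    (hbdry.eventually (lt_mem_nhds zero_lt_one))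
  obtain ⟨t, hρt, ht1⟩ := exists_between hρ1
  have ht : ‖(t : ℂ)‖ = t := by rw [norm_real, Real.norm_of_nonneg (hρ0.trans hρt.le)]
  have ht1' : ‖(t : ℂ)‖ < 1 := ht.trans_lt ht1
  obtain ⟨q, hq0, hq1, hq⟩ := exists_norm_blaschkeFactor_le hρ0 hρ1 ht1'
  obtain ⟨n, hn⟩ := exists_pow_lt_of_lt_one (hρ t (hρt.trans_eq ht.symm) ht1') hq1
  refine isFiniteBlaschke_of_pow_lt_norm ht1' hq0 hq hd hbdry (fun b hb hb0 => ?_) hn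
  contrapose! hb0
  exact norm_pos_iff.1 (hρ b hb0 hb)

end UnimodularBoundaryValues

/-- For an inner function `φ`, `ℳ(φ) = ℳ(𝒟)` if and only if `φ` is a finite
Blaschke product. -/
theorem multSpace_eq_multipliers_iff_finiteBlaschke (φ : ℂ → ℂ)
    (hφ : IsInner φ) :
    multSpace φ = dirichletMultipliers ↔ IsFiniteBlaschke φ := by
  refine ⟨fun h => ?_, fun hB => hB.multSpace_eq hφ.2.1⟩
  have hone : (fun _ => (1 : ℂ)) ∈ multSpace φ :=
    h ▸ ⟨differentiableOn_const _, fun f hf => by simpa using hf⟩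
  obtain ⟨_, _, _, hC⟩ := hone
  have hD : MemDirichlet φ := by simpa using (hC id memDirichlet_id).1
  exact isFiniteBlaschke_of_tendsto_norm hφ.1 (hφ.tendsto_norm hD)
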